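/- arXiv:math/9212207 — 6 statements merged into one kernel-verified Lean document; each statement's English description precedes it below -/
import Mathlib

section
/- Let G be a group, Λ ⊆ G, and R_Λ = {(s,t) ∈ G × G : st ∈ Λ}. The following are equivalent: (a) there exists a constant C such that for every N ≥ 1 and all finite subsets E, F ⊆ G with |E| = |F| = N one has |R_Λ ∩ (E × F)| ≤ C N; (b) there exist a constant C and a partition R_Λ = Γ₁ ∪ Γ₂ (disjoint) such that sup_{s∈G} |{t ∈ G : (s,t) ∈ Γ₁}| ≤ C and sup_{t∈G} |{s ∈ G : (s,t) ∈ Γ₂}| ≤ C. -/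
open scoped ENNReal NNReal
open MeasureTheory ContinuousLinearMap

noncomputable section

/-- `ψ : S × T → ℂ` is a Schur multiplier of norm at most `C`: for every bounded operator
`A : ℓ²(S) → ℓ²(T)` there is a bounded `B : ℓ²(S) → ℓ²(T)` whose matrix entries are
`ψ(s,t) · A(s,t)` and with `‖B‖ ≤ C‖A‖`. -/
def IsSchurMultiplier {S T : Type*} (ψ : S × T → ℂ) (C : ℝ) : Prop :=
  letI := Classical.decEq S
  letI := Classical.decEq T
  ∀ A : lp (fun _ : S => ℂ) 2 →L[ℂ] lp (fun _ : T => ℂ) 2,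
    ∃ B : lp (fun _ : S => ℂ) 2 →L[ℂ] lp (fun _ : T => ℂ) 2,
      (∀ (s : S) (t : T),
        (inner (𝕜 := ℂ) (lp.single 2 t 1) (B (lp.single 2 s 1)))
          = ψ (s, t) * inner (𝕜 := ℂ) (lp.single 2 t 1) (A (lp.single 2 s 1))) ∧
      ‖B‖ ≤ C * ‖A‖

/-!
A relation `R ⊆ α × β` is a bipartite graph, and splitting it into a part with rows of size at most
`k` and a part with columns of size at most `k` means assigning every edge to one of its two
endpoints so that no vertex receives more than `k` edges. By Hall's marriage theorem, applied with
`k` copies of each vertex, this is possible as soon as every finite set of edges has at most `k`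
times as many elements as endpoints, and that is a bound on the number of points of `R` in finite
rectangles `E × F`, linear in `|E| + |F|`. Such a bound reduces to squares `|E| = |F|` by enlarging
`E` and `F`, and is automatic when this is impossible because `α` or `β` is finite.
-/

section RectangleSparse

variable {α β : Type*} {R : Set (α × β)} {k : ℕ}

/-- The relation `R` is `k`-sparse: it has at most `k (|E| + |F|)` points in each finite rectangle
`E × F`. The sum `|E| + |F|` counts the vertices of the rectangle, `R` being seen as a bipartite
graph, which makes the constant `k` match the one in `RowColumnSplit` exactly. -/
def RectangleSparse (R : Set (α × β)) (k : ℕ) : Prop :=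
  ∀ (E : Finset α) (F : Finset β),
    (R ∩ ((E ×ˢ F : Finset (α × β)) : Set (α × β))).ncard ≤ k * (E.card + F.card)

/-- The relation `R` is the disjoint union of a relation whose rows, and a relation whose columns,
have at most `k` elements. Cardinalities are taken in `ℕ∞`, so that the bounds entail finiteness. -/
def RowColumnSplit (R : Set (α × β)) (k : ℕ) : Prop :=
  ∃ Γ₁ Γ₂ : Set (α × β), Γ₁ ∪ Γ₂ = R ∧ Disjoint Γ₁ Γ₂ ∧
    (∀ s, {t | (s, t) ∈ Γ₁}.encard ≤ k) ∧ (∀ t, {s | (s, t) ∈ Γ₂}.encard ≤ k)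

theorem encard_biUnion_le_mul_card {ι γ : Type*} {s : ι → Set γ} {A : Finset ι} {c : ℕ∞}
    (h : ∀ i ∈ A, (s i).encard ≤ c) : (⋃ i ∈ A, s i).encard ≤ c * A.card :=
  calc (⋃ i ∈ A, s i).encard ≤ ∑ i ∈ A, (s i).encard := A.set_encard_biUnion_le s
    _ ≤ A.card • c := Finset.sum_le_card_nsmul A _ _ h
    _ = c * A.card := by rw [nsmul_eq_mul, mul_comm]

theorem RowColumnSplit.rectangleSparse (h : RowColumnSplit R k) : RectangleSparse R k := by
  obtain ⟨Γ₁, Γ₂, rfl, -, hrow, hcol⟩ := h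
  intro E F
  have hcover : (Γ₁ ∪ Γ₂) ∩ ((E ×ˢ F : Finset (α × β)) : Set (α × β)) ⊆
      (⋃ s ∈ E, (s, ·) '' {t | (s, t) ∈ Γ₁}) ∪ ⋃ t ∈ F, (·, t) '' {s | (s, t) ∈ Γ₂} := by
    rintro ⟨s, t⟩ ⟨hΓ, hEF⟩
    obtain ⟨hs, ht⟩ := Finset.mem_product.1 (Finset.mem_coe.1 hEF)
    rcases hΓ with hΓ₁ | hΓ₂
    · exact .inl (Set.mem_biUnion hs ⟨t, hΓ₁, rfl⟩)
    · exact .inr (Set.mem_biUnion ht ⟨s, hΓ₂, rfl⟩)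
  have hrows := encard_biUnion_le_mul_card
    fun s (_ : s ∈ E) ↦ (Set.encard_image_le (s, ·) _).trans (hrow s)
  have hcols := encard_biUnion_le_mul_card
    fun t (_ : t ∈ F) ↦ (Set.encard_image_le (·, t) _).trans (hcol t)
  rw [← Nat.cast_le (α := ℕ∞), ((Finset.finite_toSet _).inter_of_right _).cast_ncard_eq]
  calc _ ≤ _ := Set.encard_le_encard hcover
    _ ≤ _ := Set.encard_union_le _ _
    _ ≤ k * E.card + k * F.card := add_le_add hrows hcols
    _ = ((k * (E.card + F.card) : ℕ) : ℕ∞) := by push_cast; rw [mul_add]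

theorem encard_fst_comp_preimage_singleton_le {ι γ κ : Type*} {f : ι → γ × κ}
    (hf : f.Injective) (c : γ) : ((Prod.fst ∘ f) ⁻¹' {c}).encard ≤ ENat.card κ := by
  rw [← Set.encard_univ]
  exact Set.encard_le_encard_of_injOn (f := Prod.snd ∘ f) (fun _ _ ↦ Set.mem_univ _)
    fun _ hi _ hj hij ↦ hf (Prod.ext (hi.trans hj.symm) hij)

theorem exists_forall_mem_forall_encard_preimage_le {ι γ : Type*} [DecidableEq γ]
    {t : ι → Finset γ} (h : ∀ A : Finset ι, A.card ≤ k * (A.biUnion t).card) :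
    ∃ f : ι → γ, (∀ i, f i ∈ t i) ∧ ∀ c, (f ⁻¹' {c}).encard ≤ k := by
  have hall (A : Finset ι) :
      A.card ≤ (A.biUnion fun i ↦ t i ×ˢ (Finset.univ : Finset (Fin k))).card := by
    have hcopies : (A.biUnion fun i ↦ t i ×ˢ (Finset.univ : Finset (Fin k))) =
        A.biUnion t ×ˢ Finset.univ := by ext; simp
    rw [hcopies, Finset.card_product, Finset.card_fin, mul_comm]
    exact h A
  obtain ⟨f, hf, hft⟩ := (Finset.all_card_le_biUnion_card_iff_exists_injective _).1 hall
  exact ⟨Prod.fst ∘ f, fun i ↦ (Finset.mem_product.1 (hft i)).1, fun c ↦ by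
    simpa using encard_fst_comp_preimage_singleton_le hf c⟩

theorem RectangleSparse.card_le_mul_card_biUnion [DecidableEq α] [DecidableEq β]
    (h : RectangleSparse R k) (A : Finset R) :
    A.card ≤ k * (A.biUnion fun e ↦ ({.inl e.1.1, .inr e.1.2} : Finset (α ⊕ β))).card := by
  set E := A.image fun e ↦ e.1.1
  set F := A.image fun e ↦ e.1.2
  have hvertices :
      (A.biUnion fun e ↦ ({.inl e.1.1, .inr e.1.2} : Finset (α ⊕ β))) = E.disjSum F := by
    ext (v | v) <;> simp [E, F, eq_comm]
  have hsub : Subtype.val '' (A : Set R) ⊆ R ∩ ((E ×ˢ F : Finset (α × β)) : Set (α × β)) := by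
    rintro _ ⟨e, he, rfl⟩
    exact ⟨e.2, Finset.mem_coe.2 (Finset.mem_product.2
      ⟨Finset.mem_image_of_mem _ he, Finset.mem_image_of_mem _ he⟩)⟩
  calc A.card = (Subtype.val '' (A : Set R)).ncard := by
        rw [Set.ncard_image_of_injective _ Subtype.val_injective, Set.ncard_coe_finset]
    _ ≤ (R ∩ ((E ×ˢ F : Finset (α × β)) : Set (α × β))).ncard :=
        Set.ncard_le_ncard hsub ((Finset.finite_toSet _).inter_of_right _)
    _ ≤ k * (E.card + F.card) := h E F
    _ = _ := by rw [hvertices, Finset.card_disjSum]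

theorem rowColumnSplit_of_forall_encard_preimage_le {f : R → α ⊕ β}
    (hf : ∀ e, f e = .inl e.1.1 ∨ f e = .inr e.1.2) (hk : ∀ v, (f ⁻¹' {v}).encard ≤ k) :
    RowColumnSplit R k := by
  refine ⟨Subtype.val '' {e | f e = .inl e.1.1}, Subtype.val '' {e | f e = .inr e.1.2},
    ?_, ?_, fun s ↦ ?_, fun t ↦ ?_⟩
  · have hcover : {e | f e = .inl e.1.1} ∪ {e | f e = .inr e.1.2} = Set.univ :=
      Set.eq_univ_of_forall hf
    rw [← Set.image_union, hcover, Set.image_univ, Subtype.range_coe]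
  · refine (Set.disjoint_image_iff Subtype.val_injective).2 (Set.disjoint_left.2 ?_)
    exact fun e hl hr ↦ Sum.inl_ne_inr (hl.symm.trans hr)
  · have hrow : {t | (s, t) ∈ Subtype.val '' {e : R | f e = .inl e.1.1}} ⊆
        (fun e ↦ e.1.2) '' (f ⁻¹' {.inl s}) := by
      rintro t ⟨e, he, hst⟩
      exact ⟨e, by simpa [hst] using he, by simp [hst]⟩
    exact (Set.encard_le_encard hrow).trans ((Set.encard_image_le _ _).trans (hk _))
  · have hcol : {s | (s, t) ∈ Subtype.val '' {e : R | f e = .inr e.1.2}} ⊆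
        (fun e ↦ e.1.1) '' (f ⁻¹' {.inr t}) := by
      rintro s ⟨e, he, hst⟩
      exact ⟨e, by simpa [hst] using he, by simp [hst]⟩
    exact (Set.encard_le_encard hcol).trans ((Set.encard_image_le _ _).trans (hk _))

theorem RectangleSparse.rowColumnSplit (h : RectangleSparse R k) : RowColumnSplit R k := by
  classical
  obtain ⟨f, hf, hk⟩ := exists_forall_mem_forall_encard_preimage_le h.card_le_mul_card_biUnion
  exact rowColumnSplit_of_forall_encard_preimage_le (fun e ↦ by simpa using hf e) hk

theorem rectangleSparse_iff_rowColumnSplit : RectangleSparse R k ↔ RowColumnSplit R k :=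
  ⟨RectangleSparse.rowColumnSplit, RowColumnSplit.rectangleSparse⟩

theorem ncard_inter_product_le (R : Set (α × β)) (E : Finset α) (F : Finset β) :
    (R ∩ ((E ×ˢ F : Finset (α × β)) : Set (α × β))).ncard ≤ E.card * F.card := by
  rw [← Finset.card_product, ← Set.ncard_coe_finset]
  exact Set.ncard_le_ncard Set.inter_subset_right (Finset.finite_toSet _)

theorem rectangleSparse_card_left [Finite α] (R : Set (α × β)) :
    RectangleSparse R (Nat.card α) := fun E F ↦
  calc _ ≤ E.card * F.card := ncard_inter_product_le R E F
    _ ≤ Nat.card α * (E.card + F.card) :=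
      Nat.mul_le_mul (Set.ncard_coe_finset E ▸ Set.ncard_le_card _) (Nat.le_add_left _ _)

theorem rectangleSparse_card_right [Finite β] (R : Set (α × β)) :
    RectangleSparse R (Nat.card β) := fun E F ↦
  calc _ ≤ E.card * F.card := ncard_inter_product_le R E F
    _ = F.card * E.card := mul_comm _ _
    _ ≤ Nat.card β * (E.card + F.card) :=
      Nat.mul_le_mul (Set.ncard_coe_finset F ▸ Set.ncard_le_card _) (Nat.le_add_right _ _)

theorem rectangleSparse_of_card_eq [Infinite α] [Infinite β]
    (h : ∀ (E : Finset α) (F : Finset β), E.card = F.card →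
      (R ∩ ((E ×ˢ F : Finset (α × β)) : Set (α × β))).ncard ≤ k * E.card) :
    RectangleSparse R k := by
  intro E F
  obtain ⟨E', hEE', hE'⟩ :=
    Infinite.exists_superset_card_eq E (E.card + F.card) (Nat.le_add_right _ _)
  obtain ⟨F', hFF', hF'⟩ :=
    Infinite.exists_superset_card_eq F (E.card + F.card) (Nat.le_add_left _ _)
  calc _ ≤ (R ∩ ((E' ×ˢ F' : Finset (α × β)) : Set (α × β))).ncard :=
        Set.ncard_le_ncard (by gcongr) ((Finset.finite_toSet _).inter_of_right _)
    _ ≤ k * E'.card := h E' F' (hE'.trans hF'.symm)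
    _ = k * (E.card + F.card) := by rw [hE']

theorem exists_rectangleSparse_of_card_eq
    (h : ∀ (E : Finset α) (F : Finset β), E.card = F.card →
      (R ∩ ((E ×ˢ F : Finset (α × β)) : Set (α × β))).ncard ≤ k * E.card) :
    ∃ l, RectangleSparse R l := by
  rcases finite_or_infinite α with _ | _
  · exact ⟨_, rectangleSparse_card_left R⟩
  rcases finite_or_infinite β with _ | _
  · exact ⟨_, rectangleSparse_card_right R⟩
  exact ⟨k, rectangleSparse_of_card_eq h⟩

theorem exists_forall_ncard_inter_product_le_iff_exists_rectangleSparse :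
    (∃ C : ℝ, ∀ N : ℕ, 1 ≤ N → ∀ (E : Finset α) (F : Finset β), E.card = N → F.card = N →
      ((R ∩ ((E ×ˢ F : Finset (α × β)) : Set (α × β))).ncard : ℝ) ≤ C * N) ↔
    ∃ k, RectangleSparse R k := by
  constructor
  · rintro ⟨C, hC⟩
    refine exists_rectangleSparse_of_card_eq (k := ⌈C⌉₊) fun E F hEF ↦ ?_
    rcases E.eq_empty_or_nonempty with rfl | hE
    · simp
    rw [← Nat.cast_le (α := ℝ), Nat.cast_mul]
    calc _ ≤ C * E.card := hC E.card hE.card_pos E F rfl hEF.symm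
      _ ≤ ⌈C⌉₊ * E.card := by gcongr; exact Nat.le_ceil C
  · rintro ⟨k, hk⟩
    refine ⟨2 * k, fun N _ E F hE hF ↦ ?_⟩
    calc _ ≤ ((k * (E.card + F.card) : ℕ) : ℝ) := Nat.cast_le.2 (hk E F)
      _ = 2 * k * N := by rw [hE, hF]; push_cast; ring

theorem toENNReal_le_ofReal_iff_le_floor {m : ℕ∞} {C : ℝ} :
    (m : ℝ≥0∞) ≤ ENNReal.ofReal C ↔ m ≤ ⌊C⌋₊ := by
  induction m with
  | top => simp
  | coe n =>
    rcases eq_or_ne n 0 with rfl | hn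
    · simp
    · rw [ENat.toENNReal_coe, ENNReal.natCast_le_ofReal hn, Nat.cast_le, Nat.le_floor_iff' hn]

theorem exists_rowColumnSplit_iff :
    (∃ k, RowColumnSplit R k) ↔
    ∃ (C : ℝ) (Γ₁ Γ₂ : Set (α × β)), Γ₁ ∪ Γ₂ = R ∧ Disjoint Γ₁ Γ₂ ∧
      (∀ s, ({t | (s, t) ∈ Γ₁}.encard : ℝ≥0∞) ≤ ENNReal.ofReal C) ∧
      (∀ t, ({s | (s, t) ∈ Γ₂}.encard : ℝ≥0∞) ≤ ENNReal.ofReal C) := by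
  simp only [toENNReal_le_ofReal_iff_le_floor]
  exact ⟨fun ⟨k, hk⟩ ↦ ⟨k, by rwa [Nat.floor_natCast]⟩, fun ⟨C, hC⟩ ↦ ⟨⌊C⌋₊, hC⟩⟩

end RectangleSparse

theorem stmt_8_general {α β : Type*} (R : Set (α × β)) :
    (∃ C : ℝ, ∀ N : ℕ, 1 ≤ N → ∀ (E : Finset α) (F : Finset β), E.card = N → F.card = N →
      ((R ∩ ((E ×ˢ F : Finset (α × β)) : Set (α × β))).ncard : ℝ) ≤ C * N) ↔
    (∃ (C : ℝ) (Γ₁ Γ₂ : Set (α × β)), Γ₁ ∪ Γ₂ = R ∧ Disjoint Γ₁ Γ₂ ∧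
      (∀ s, ({t | (s, t) ∈ Γ₁}.encard : ℝ≥0∞) ≤ ENNReal.ofReal C) ∧
      (∀ t, ({s | (s, t) ∈ Γ₂}.encard : ℝ≥0∞) ≤ ENNReal.ofReal C)) :=
  calc _ ↔ ∃ k, RectangleSparse R k :=
        exists_forall_ncard_inter_product_le_iff_exists_rectangleSparse
    _ ↔ ∃ k, RowColumnSplit R k := exists_congr fun _ ↦ rectangleSparse_iff_rowColumnSplit
    _ ↔ _ := exists_rowColumnSplit_iff

/-- for `Λ ⊆ G` and `R_Λ = {(s,t) : st ∈ Λ}`, the rectangle-counting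
condition (a) is equivalent to the existence of a disjoint partition `R_Λ = Γ₁ ∪ Γ₂` with
uniformly finite rows in `Γ₁` and columns in `Γ₂` (condition (b)). -/
theorem stmt_8 {G : Type*} [Group G] (Λ : Set G) :
    (∃ C : ℝ, ∀ N : ℕ, 1 ≤ N → ∀ (E F : Finset G), E.card = N → F.card = N →
      (({p : G × G | p.1 * p.2 ∈ Λ} ∩ ((E ×ˢ F : Finset (G × G)) : Set (G × G))).ncard : ℝ)
        ≤ C * N) ↔
    (∃ (C : ℝ) (Γ₁ Γ₂ : Set (G × G)),
      Γ₁ ∪ Γ₂ = {p : G × G | p.1 * p.2 ∈ Λ} ∧ Disjoint Γ₁ Γ₂ ∧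
      (∀ s : G, ({t : G | (s, t) ∈ Γ₁}.encard : ℝ≥0∞) ≤ ENNReal.ofReal C) ∧
      (∀ t : G, ({s : G | (s, t) ∈ Γ₂}.encard : ℝ≥0∞) ≤ ENNReal.ofReal C)) :=
  stmt_8_general _
end
end

section
/- Let G be a group, Λ ⊆ G, and C ≥ 1. Suppose R_Λ = {(s,t) ∈ G × G : st ∈ Λ} admits a partition R_Λ = Γ₁ ∪ Γ₂ (disjoint) with sup_{s∈G} |{t : (s,t) ∈ Γ₁}| ≤ C and sup_{t∈G} |{s : (s,t) ∈ Γ₂}| ≤ C. Then for every complex Hilbert space H and every finitely supported function a : G → B(H) with a(x) = 0 for x ∉ Λ, ‖Σ_{x∈Λ} λ(x) ⊗ a(x)‖ ≤ 2√C · max{ ‖Σ_{x} a(x)* a(x)‖^{1/2}, ‖Σ_{x} a(x) a(x)*‖^{1/2} }, where Σ_{x} λ(x) ⊗ a(x) denotes the operator T on ℓ²(G; H) given by (T f)(s) = Σ_{x∈G} a(x) f(x⁻¹ s). -/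
open scoped ENNReal NNReal
open MeasureTheory ContinuousLinearMap

noncomputable section

/-!
Testing `T` against `f` and `g` gives the form `∑_{(s,t) ∈ R_Λ} ⟪a(st) f(t⁻¹), g(s)⟫`, which splits
along `Γ₁` and `Γ₂`. On `Γ₁`, Cauchy–Schwarz separates `a(st) f(t⁻¹)`, controlled for fixed `t` by
`∑ a(x)* a(x)`, from `g(s)`, which occurs at most `C` times for each `s`. Moving `a(st)` to the
other side of the inner product exchanges the two coordinates, so that the same estimate bounds the
sum over `Γ₂` by `∑ a(x) a(x)*`.
-/

section

open Finset
open scoped InnerProductSpace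

theorem mul_add_mul_le_two_mul_mul_max {c : ℝ} (hc : 0 ≤ c) (x y : ℝ) :
    c * x + c * y ≤ 2 * c * max x y := by
  rw [← mul_add, mul_right_comm, mul_comm _ c, two_mul]
  gcongr
  exacts [le_max_left x y, le_max_right x y]

theorem exists_sum_sum_eq_sum_mul {G M : Type*} [Group G] [AddCommMonoid M]
    (F S : Finset G) (w : G → G → M) :
    ∃ D : Finset (G × G), (∀ p ∈ D, p.1 * p.2 ∈ S) ∧
      ∑ s ∈ F, ∑ x ∈ S, w s x = ∑ p ∈ D, w p.1 (p.1 * p.2) := by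
  refine ⟨(F ×ˢ S).map ((Equiv.refl G).prodShear fun s => Equiv.mulLeft s⁻¹).toEmbedding, ?_, ?_⟩
  · simp +contextual [Equiv.prodShear]
  · simp [sum_product, Equiv.prodShear]

theorem card_le_of_injOn_of_encard_le {α β : Type*} {s : Finset α} {t : Set β} {e : α → β}
    (he : Set.MapsTo e s t) (hinj : Set.InjOn e s) {C : ℝ} (hC : 0 ≤ C)
    (ht : (t.encard : ℝ≥0∞) ≤ ENNReal.ofReal C) : (#s : ℝ) ≤ C := by
  have hst : ((#s : ℕ∞) : ℝ≥0∞) ≤ t.encard := by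
    simpa only [Set.encard_coe_eq_coe_finsetCard] using
      ENat.toENNReal_le.2 (Set.encard_le_encard_of_injOn he hinj)
  rw [ENat.toENNReal_coe, ← ENNReal.ofReal_natCast] at hst
  exact (ENNReal.ofReal_le_ofReal_iff hC).1 (hst.trans ht)

section SquareSummable

variable {ι X E : Type*} [NormedAddCommGroup E]

theorem sum_norm_sq_le_norm_sq (f : lp (fun _ : X => E) 2) (F : Finset X) :
    ∑ x ∈ F, ‖f x‖ ^ 2 ≤ ‖f‖ ^ 2 := by
  simpa using lp.sum_rpow_le_norm_rpow (p := 2) (by norm_num) f F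

theorem sum_le_mul_norm_sq_of_fiberwise_le [DecidableEq X] (f : lp (fun _ : X => E) 2)
    {D : Finset ι} {p : ι → X} {w : ι → ℝ} {M : ℝ} (hM : 0 ≤ M)
    (hw : ∀ x, ∑ i ∈ D with p i = x, w i ≤ M * ‖f x‖ ^ 2) :
    ∑ i ∈ D, w i ≤ M * ‖f‖ ^ 2 :=
  calc ∑ i ∈ D, w i
    _ = ∑ x ∈ D.image p, ∑ i ∈ D with p i = x, w i :=
      (sum_fiberwise_of_maps_to (fun _ => mem_image_of_mem p) w).symm
    _ ≤ ∑ x ∈ D.image p, M * ‖f x‖ ^ 2 := sum_le_sum fun x _ => hw x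
    _ = M * ∑ x ∈ D.image p, ‖f x‖ ^ 2 := (mul_sum _ _ _).symm
    _ ≤ M * ‖f‖ ^ 2 := by gcongr; exact sum_norm_sq_le_norm_sq f _

end SquareSummable

variable {𝕜 H K : Type*} [RCLike 𝕜]
  [NormedAddCommGroup H] [InnerProductSpace 𝕜 H] [NormedAddCommGroup K] [InnerProductSpace 𝕜 K]

theorem opNorm_le_of_forall_norm_sum_inner_le {Y : Type*}
    {T : H →L[𝕜] lp (fun _ : Y => K) 2} {M : ℝ} (hM : 0 ≤ M)
    (h : ∀ f (g : lp (fun _ : Y => K) 2) (F : Finset Y),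
      ‖∑ s ∈ F, ⟪T f s, g s⟫_𝕜‖ ≤ M * ‖f‖ * ‖g‖) : ‖T‖ ≤ M := by
  refine opNorm_le_of_re_inner_le hM fun f g hf hg => (RCLike.re_le_norm _).trans ?_
  simpa [hf, hg] using
    le_of_tendsto (lp.hasSum_inner (𝕜 := 𝕜) (T f) g).norm (.of_forall (h f g))

section SchurTest

variable {ι X Y : Type*} [DecidableEq X] [DecidableEq Y]

theorem sum_norm_inner_le_of_card_fiber_le {D : Finset ι} {r : ι → Y} {c : ι → X}
    {b : ι → H →L[𝕜] K} {C M : ℝ} (hC : 0 ≤ C) (hM : 0 ≤ M)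
    (hrow : ∀ y, (#{i ∈ D | r i = y} : ℝ) ≤ C)
    (hcol : ∀ x v, ∑ i ∈ D with c i = x, ‖b i v‖ ^ 2 ≤ M * ‖v‖ ^ 2)
    (f : lp (fun _ : X => H) 2) (g : lp (fun _ : Y => K) 2) :
    ∑ i ∈ D, ‖⟪b i (f (c i)), g (r i)⟫_𝕜‖ ≤ √C * √M * ‖f‖ * ‖g‖ := by
  have hf : ∑ i ∈ D, ‖b i (f (c i))‖ ^ 2 ≤ M * ‖f‖ ^ 2 :=
    sum_le_mul_norm_sq_of_fiberwise_le (p := c) f hM fun x =>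
      (sum_congr rfl fun i hi => by rw [(mem_filter.1 hi).2]).trans_le (hcol x (f x))
  have hg : ∑ i ∈ D, ‖g (r i)‖ ^ 2 ≤ C * ‖g‖ ^ 2 :=
    sum_le_mul_norm_sq_of_fiberwise_le (p := r) g hC fun y => by
      rw [sum_congr rfl fun i hi => by rw [(mem_filter.1 hi).2], sum_const, nsmul_eq_mul]
      gcongr
      exact hrow y
  calc ∑ i ∈ D, ‖⟪b i (f (c i)), g (r i)⟫_𝕜‖
    _ ≤ ∑ i ∈ D, ‖b i (f (c i))‖ * ‖g (r i)‖ := sum_le_sum fun _ _ => norm_inner_le_norm _ _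
    _ ≤ √(∑ i ∈ D, ‖b i (f (c i))‖ ^ 2) * √(∑ i ∈ D, ‖g (r i)‖ ^ 2) :=
      Real.sum_mul_le_sqrt_mul_sqrt D _ _
    _ ≤ √(M * ‖f‖ ^ 2) * √(C * ‖g‖ ^ 2) := by gcongr
    _ = √C * √M * ‖f‖ * ‖g‖ := by
      rw [Real.sqrt_mul hM, Real.sqrt_mul hC, Real.sqrt_sq (norm_nonneg _),
        Real.sqrt_sq (norm_nonneg _)]
      ring

end SchurTest

variable [CompleteSpace H] [CompleteSpace K]

section ColumnBound

variable {ι κ : Type*} (b : κ → H →L[𝕜] K)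

theorem sum_norm_sq_apply_le (S : Finset κ) (v : H) :
    ∑ x ∈ S, ‖b x v‖ ^ 2 ≤ ‖∑ x ∈ S, adjoint (b x) ∘L b x‖ * ‖v‖ ^ 2 :=
  calc ∑ x ∈ S, ‖b x v‖ ^ 2
    _ = RCLike.re ⟪(∑ x ∈ S, adjoint (b x) ∘L b x) v, v⟫_𝕜 := by
      simp only [apply_norm_sq_eq_inner_adjoint_left, _root_.sum_apply, sum_inner, map_sum]
    _ ≤ ‖(∑ x ∈ S, adjoint (b x) ∘L b x) v‖ * ‖v‖ := re_inner_le_norm _ _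
    _ ≤ ‖∑ x ∈ S, adjoint (b x) ∘L b x‖ * ‖v‖ * ‖v‖ := by gcongr; exact le_opNorm _ _
    _ = ‖∑ x ∈ S, adjoint (b x) ∘L b x‖ * ‖v‖ ^ 2 := by ring

theorem sum_norm_sq_apply_le_of_injOn {D : Finset ι} {S : Finset κ} {e : ι → κ}
    (he : Set.MapsTo e D S) (hinj : Set.InjOn e D) (v : H) :
    ∑ i ∈ D, ‖b (e i) v‖ ^ 2 ≤ ‖∑ x ∈ S, adjoint (b x) ∘L b x‖ * ‖v‖ ^ 2 := by
  classical
  calc ∑ i ∈ D, ‖b (e i) v‖ ^ 2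
    _ = ∑ x ∈ D.image e, ‖b x v‖ ^ 2 := (sum_image (f := fun x => ‖b x v‖ ^ 2) hinj).symm
    _ ≤ ∑ x ∈ S, ‖b x v‖ ^ 2 :=
      sum_le_sum_of_subset_of_nonneg (image_subset_iff.2 he) fun _ _ _ => by positivity
    _ ≤ _ := sum_norm_sq_apply_le b S v

end ColumnBound

variable {G : Type*} [Group G]

section RowsAndColumns

variable {Γ : Set (G × G)} {C : ℝ} {S : Finset G} {D : Finset (G × G)}

theorem sum_norm_inner_le_of_encard_row_le (hC : 0 ≤ C)
    (hΓ : ∀ s, ({t | (s, t) ∈ Γ}.encard : ℝ≥0∞) ≤ ENNReal.ofReal C)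
    (hDΓ : ∀ p ∈ D, p ∈ Γ) (hDS : ∀ p ∈ D, p.1 * p.2 ∈ S) (a : G → H →L[𝕜] K)
    (f : lp (fun _ : G => H) 2) (g : lp (fun _ : G => K) 2) :
    ∑ p ∈ D, ‖⟪a (p.1 * p.2) (f p.2⁻¹), g p.1⟫_𝕜‖ ≤
      √C * √‖∑ x ∈ S, adjoint (a x) ∘L a x‖ * ‖f‖ * ‖g‖ := by
  classical
  refine sum_norm_inner_le_of_card_fiber_le (r := Prod.fst) (c := fun p => p.2⁻¹)
    (b := fun p => a (p.1 * p.2)) hC (norm_nonneg _) (fun s => ?_) (fun u v => ?_) f g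
  · refine card_le_of_injOn_of_encard_le (t := {t | (s, t) ∈ Γ}) (e := Prod.snd) ?_ ?_ hC (hΓ s)
    · rintro ⟨s', t⟩ hp
      obtain ⟨hpD, rfl⟩ := mem_filter.1 hp
      exact hDΓ _ hpD
    · rintro ⟨s₁, t₁⟩ hp ⟨s₂, t₂⟩ hq ht
      exact Prod.ext ((mem_filter.1 hp).2.trans (mem_filter.1 hq).2.symm) ht
  · have hinj : Set.InjOn (fun p : G × G => p.1 * p.2) ({p ∈ D | p.2⁻¹ = u} : Finset _) := by
      rintro ⟨s₁, t₁⟩ hp ⟨s₂, t₂⟩ hq hst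
      obtain rfl : t₁ = t₂ := inv_injective ((mem_filter.1 hp).2.trans (mem_filter.1 hq).2.symm)
      exact Prod.ext (mul_right_cancel hst) rfl
    exact sum_norm_sq_apply_le_of_injOn a (fun p hp => hDS p (mem_filter.1 hp).1) hinj v

theorem sum_norm_inner_le_of_encard_column_le (hC : 0 ≤ C)
    (hΓ : ∀ t, ({s | (s, t) ∈ Γ}.encard : ℝ≥0∞) ≤ ENNReal.ofReal C)
    (hDΓ : ∀ p ∈ D, p ∈ Γ) (hDS : ∀ p ∈ D, p.1 * p.2 ∈ S) (a : G → H →L[𝕜] K)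
    (f : lp (fun _ : G => H) 2) (g : lp (fun _ : G => K) 2) :
    ∑ p ∈ D, ‖⟪a (p.1 * p.2) (f p.2⁻¹), g p.1⟫_𝕜‖ ≤
      √C * √‖∑ x ∈ S, a x ∘L adjoint (a x)‖ * ‖f‖ * ‖g‖ := by
  classical
  have hadj : ∑ p ∈ D, ‖⟪adjoint (a (p.1 * p.2)) (g p.1), f p.2⁻¹⟫_𝕜‖ ≤
      √C * √‖∑ x ∈ S, a x ∘L adjoint (a x)‖ * ‖g‖ * ‖f‖ := by
    refine sum_norm_inner_le_of_card_fiber_le (r := fun p => p.2⁻¹) (c := Prod.fst)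
      (b := fun p => adjoint (a (p.1 * p.2))) hC (norm_nonneg _) (fun u => ?_) (fun s v => ?_) g f
    · refine card_le_of_injOn_of_encard_le (t := {s | (s, u⁻¹) ∈ Γ}) (e := Prod.fst) ?_ ?_ hC
        (hΓ u⁻¹)
      · rintro ⟨s, t⟩ hp
        obtain ⟨hpD, rfl⟩ := mem_filter.1 hp
        simpa using hDΓ _ hpD
      · rintro ⟨s₁, t₁⟩ hp ⟨s₂, t₂⟩ hq hs
        exact Prod.ext hs (inv_injective ((mem_filter.1 hp).2.trans (mem_filter.1 hq).2.symm))
    · have hinj : Set.InjOn (fun p : G × G => p.1 * p.2) ({p ∈ D | p.1 = s} : Finset _) := by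
        rintro ⟨s₁, t₁⟩ hp ⟨s₂, t₂⟩ hq hst
        obtain rfl : s₁ = s₂ := (mem_filter.1 hp).2.trans (mem_filter.1 hq).2.symm
        exact Prod.ext rfl (mul_left_cancel hst)
      simpa only [adjoint_adjoint] using sum_norm_sq_apply_le_of_injOn (fun x => adjoint (a x))
        (fun p hp => hDS p (mem_filter.1 hp).1) hinj v
  simpa only [adjoint_inner_left, norm_inner_symm (g _), mul_right_comm _ ‖g‖] using hadj

theorem norm_sum_inner_le_of_subset_union {Γ₁ Γ₂ : Set (G × G)} {C₁ C₂ : ℝ}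
    (hC₁ : 0 ≤ C₁) (hC₂ : 0 ≤ C₂)
    (h₁ : ∀ s, ({t | (s, t) ∈ Γ₁}.encard : ℝ≥0∞) ≤ ENNReal.ofReal C₁)
    (h₂ : ∀ t, ({s | (s, t) ∈ Γ₂}.encard : ℝ≥0∞) ≤ ENNReal.ofReal C₂)
    (hDΓ : ∀ p ∈ D, p ∈ Γ₁ ∪ Γ₂) (hDS : ∀ p ∈ D, p.1 * p.2 ∈ S) (a : G → H →L[𝕜] K)
    (f : lp (fun _ : G => H) 2) (g : lp (fun _ : G => K) 2) :
    ‖∑ p ∈ D, ⟪a (p.1 * p.2) (f p.2⁻¹), g p.1⟫_𝕜‖ ≤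
      (√C₁ * √‖∑ x ∈ S, adjoint (a x) ∘L a x‖ + √C₂ * √‖∑ x ∈ S, a x ∘L adjoint (a x)‖) *
        ‖f‖ * ‖g‖ := by
  classical
  have hrows := sum_norm_inner_le_of_encard_row_le (D := {p ∈ D | p ∈ Γ₁}) hC₁ h₁
    (fun p hp => (mem_filter.1 hp).2) (fun p hp => hDS p (mem_filter.1 hp).1) a f g
  have hcolumns := sum_norm_inner_le_of_encard_column_le (D := {p ∈ D | p ∉ Γ₁}) hC₂ h₂
    (fun p hp => (hDΓ p (mem_filter.1 hp).1).resolve_left (mem_filter.1 hp).2)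
    (fun p hp => hDS p (mem_filter.1 hp).1) a f g
  refine (norm_sum_le _ _).trans ?_
  rw [← sum_filter_add_sum_filter_not D (· ∈ Γ₁), add_mul, add_mul]
  exact add_le_add hrows hcolumns

end RowsAndColumns

theorem stmt_9_general {Λ : Set G} {C₁ C₂ : ℝ} (hC₁ : 0 ≤ C₁) (hC₂ : 0 ≤ C₂)
    {Γ₁ Γ₂ : Set (G × G)} (hΓ : {p : G × G | p.1 * p.2 ∈ Λ} ⊆ Γ₁ ∪ Γ₂)
    (h₁ : ∀ s, ({t | (s, t) ∈ Γ₁}.encard : ℝ≥0∞) ≤ ENNReal.ofReal C₁)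
    (h₂ : ∀ t, ({s | (s, t) ∈ Γ₂}.encard : ℝ≥0∞) ≤ ENNReal.ofReal C₂)
    (a : G →₀ (H →L[𝕜] K)) (ha : ∀ x ∉ Λ, a x = 0)
    (T : lp (fun _ : G => H) 2 →L[𝕜] lp (fun _ : G => K) 2)
    (hT : ∀ f s, T f s = ∑ x ∈ a.support, a x (f (x⁻¹ * s))) :
    ‖T‖ ≤ √C₁ * √‖∑ x ∈ a.support, adjoint (a x) ∘L a x‖ +
      √C₂ * √‖∑ x ∈ a.support, a x ∘L adjoint (a x)‖ := by
  refine opNorm_le_of_forall_norm_sum_inner_le (by positivity) fun f g F => ?_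
  obtain ⟨D, hDS, hD⟩ := exists_sum_sum_eq_sum_mul F a.support
    fun s x => ⟪a x (f (x⁻¹ * s)), g s⟫_𝕜
  have hDΓ : ∀ p ∈ D, p ∈ Γ₁ ∪ Γ₂ := fun p hp =>
    hΓ (by_contra fun hp' => Finsupp.mem_support_iff.1 (hDS p hp) (ha _ hp'))
  simp only [hT, sum_inner, hD, mul_inv_rev, inv_mul_cancel_right]
  exact norm_sum_inner_le_of_subset_union hC₁ hC₂ h₁ h₂ hDΓ hDS a f g

end

/-- if `R_Λ = {(s,t) : st ∈ Λ}` admits a disjoint partition `Γ₁ ∪ Γ₂` with rows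
of `Γ₁` and columns of `Γ₂` of cardinality at most `C` (`C ≥ 1`), then for every Hilbert
space `H` and finitely supported `a : G → B(H)` vanishing off `Λ`, the operator
`Σ_{x∈Λ} λ(x) ⊗ a(x)` on `ℓ²(G;H)` has norm at most
`2√C · max{‖Σ a(x)*a(x)‖^{1/2}, ‖Σ a(x)a(x)*‖^{1/2}}`. -/
theorem stmt_9 {G : Type*} [Group G] (Λ : Set G) (C : ℝ) (hC : 1 ≤ C)
    (Γ₁ Γ₂ : Set (G × G))
    (hU : Γ₁ ∪ Γ₂ = {p : G × G | p.1 * p.2 ∈ Λ}) (hD : Disjoint Γ₁ Γ₂)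
    (h1 : ∀ s : G, ({t : G | (s, t) ∈ Γ₁}.encard : ℝ≥0∞) ≤ ENNReal.ofReal C)
    (h2 : ∀ t : G, ({s : G | (s, t) ∈ Γ₂}.encard : ℝ≥0∞) ≤ ENNReal.ofReal C)
    (H : Type*) [NormedAddCommGroup H] [InnerProductSpace ℂ H] [CompleteSpace H]
    (a : G →₀ (H →L[ℂ] H)) (ha : ∀ x ∉ Λ, a x = 0)
    (T : lp (fun _ : G => H) 2 →L[ℂ] lp (fun _ : G => H) 2)
    (hT : ∀ (f : lp (fun _ : G => H) 2) (s : G),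
      T f s = ∑ x ∈ a.support, (a x) (f (x⁻¹ * s))) :
    ‖T‖ ≤ 2 * Real.sqrt C * max
      (Real.sqrt ‖∑ x ∈ a.support, (ContinuousLinearMap.adjoint (a x)).comp (a x)‖)
      (Real.sqrt ‖∑ x ∈ a.support, (a x).comp (ContinuousLinearMap.adjoint (a x))‖) :=
  have hC₀ : 0 ≤ C := zero_le_one.trans hC
  (stmt_9_general hC₀ hC₀ hU.ge h1 h2 a ha T hT).trans
    (mul_add_mul_le_two_mul_mul_max (Real.sqrt_nonneg C) _ _)
end
end

section
/- Let N ≥ 1 and let f : 𝕋^N → ℝ be a continuous function on the N-fold product of the circle group 𝕋 = {z ∈ ℂ : |z| = 1}, and let m be the normalized Haar (probability) measure on 𝕋. Then for every δ > 0 there exist positive integers n₁, n₂, …, n_N with 2n₁ < n₂, 2n₂ < n₃, …, 2n_{N−1} < n_N such that ∫_𝕋 f(z^{n₁}, z^{n₂}, …, z^{n_N}) dm(z) ≤ ∫_{𝕋^N} f(z₁,…,z_N) dm(z₁)⋯dm(z_N) + δ. In particular ∫_{𝕋^N} f dm^N ≥ inf over such lacunary tuples of ∫_𝕋 f(z^{n₁},…,z^{n_N})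 dm(z). -/
open scoped ENNReal NNReal
open MeasureTheory ContinuousLinearMap

noncomputable section

/-! The push-forward of `m` under `z ↦ (z ^ k ^ i)ᵢ` has `a`-th Fourier coefficient
`∫ z ^ ∑ i, a i * k ^ i`. For `a ≠ 0` the exponent is a nonzero polynomial in `k`, so it vanishes
for only finitely many `k`, and the coefficient is eventually `0`. By Stone–Weierstrass the
push-forwards converge weakly to the Haar measure of the torus, so `n i = k ^ i` works for every
large `k`; lacunarity only needs `k ≥ 3`. -/

open Filter Topology

section StoneWeierstrass

variable {X 𝕜 : Type*} [TopologicalSpace X] [CompactSpace X] [RCLike 𝕜]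

theorem topologicalClosure_span_submonoid_eq_top {S : Submonoid C(X, 𝕜)}
    (hstar : ∀ g ∈ S, star g ∈ S) (hsep : ∀ x y, x ≠ y → ∃ g ∈ S, g x ≠ g y) :
    (Submodule.span 𝕜 (S : Set C(X, 𝕜))).topologicalClosure = ⊤ := by
  have star_subset : star (S : Set C(X, 𝕜)) ⊆ S := fun g hg => star_star g ▸ hstar _ hg
  have adjoin_eq_span :
      (StarAlgebra.adjoin 𝕜 (S : Set C(X, 𝕜))).toSubalgebra.toSubmodule = Submodule.span 𝕜 S := by
    rw [StarAlgebra.adjoin_toSubalgebra, Set.union_eq_left.mpr star_subset,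
      Algebra.adjoin_eq_span, Submonoid.closure_eq]
  have adjoin_dense : (StarAlgebra.adjoin 𝕜 (S : Set C(X, 𝕜))).topologicalClosure = ⊤ := by
    refine ContinuousMap.starSubalgebra_topologicalClosure_eq_top_of_separatesPoints _ ?_
    intro x y hxy
    obtain ⟨g, hg, hgxy⟩ := hsep x y hxy
    exact ⟨g, ⟨g, StarAlgebra.subset_adjoin 𝕜 _ hg, rfl⟩, hgxy⟩
  rw [← adjoin_eq_span]
  exact congrArg (fun A => Subalgebra.toSubmodule (StarSubalgebra.toSubalgebra A)) adjoin_dense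

end StoneWeierstrass

section WeakConvergence

variable {X 𝕜 : Type*} [TopologicalSpace X] [CompactSpace X] [MeasurableSpace X]
  [OpensMeasurableSpace X] [RCLike 𝕜]

theorem integrable_continuousMap (μ : Measure X) [IsFiniteMeasure μ] (g : C(X, 𝕜)) :
    Integrable g μ :=
  (BoundedContinuousFunction.mkOfCompact g).integrable μ

theorem lipschitzWith_integral_continuousMap (μ : Measure X) [IsProbabilityMeasure μ] :
    LipschitzWith 1 fun g : C(X, 𝕜) => ∫ x, g x ∂μ := by
  refine LipschitzWith.of_dist_le_mul fun g h => ?_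
  rw [NNReal.coe_one, one_mul, dist_eq_norm, dist_eq_norm,
    ← integral_sub (integrable_continuousMap μ g) (integrable_continuousMap μ h)]
  exact (BoundedContinuousFunction.mkOfCompact (g - h)).norm_integral_le_norm μ

theorem tendsto_integral_of_topologicalClosure_span_eq_top {κ : Type*} {l : Filter κ}
    {μ : κ → Measure X} [∀ k, IsProbabilityMeasure (μ k)]
    {ν : Measure X} [IsProbabilityMeasure ν] {S : Set C(X, 𝕜)}
    (hdense : (Submodule.span 𝕜 S).topologicalClosure = ⊤)
    (hS : ∀ g ∈ S, Tendsto (fun k => ∫ x, g x ∂μ k) l (𝓝 (∫ x, g x ∂ν))) (f : C(X, 𝕜)) :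
    Tendsto (fun k => ∫ x, f x ∂μ k) l (𝓝 (∫ x, f x ∂ν)) := by
  have equicontinuous : Equicontinuous fun k (g : C(X, 𝕜)) => ∫ x, g x ∂μ k :=
    (LipschitzWith.uniformEquicontinuous _ 1
      fun k => lipschitzWith_integral_continuousMap (μ k)).equicontinuous
  have closed := equicontinuous.isClosed_setOfPred_tendsto (l := l)
    (lipschitzWith_integral_continuousMap ν).continuous
  have mem_closure : f ∈ closure (Submodule.span 𝕜 S : Set C(X, 𝕜)) := by
    rw [← Submodule.topologicalClosure_coe, hdense]
    trivial
  refine closure_minimal (fun g hg => ?_) closed mem_closure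
  induction hg using Submodule.span_induction with
  | mem g hg => exact hS g hg
  | zero => simpa using tendsto_const_nhds
  | add g h _ _ ihg ihh =>
    simpa [integral_add, integrable_continuousMap] using ihg.add ihh
  | smul c g _ ih => simpa [integral_const_mul] using ih.const_mul c

end WeakConvergence

section Characters

theorem integral_monoidHom_eq_zero {G 𝕜 : Type*} [Group G] [MeasurableSpace G] [MeasurableMul G]
    [RCLike 𝕜] (μ : Measure G) [μ.IsMulLeftInvariant] {χ : G →* 𝕜} (hχ : χ ≠ 1) :
    ∫ x, χ x ∂μ = 0 := by
  obtain ⟨g, hg⟩ := DFunLike.ne_iff.mp hχ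
  have translate : χ g * ∫ x, χ x ∂μ = ∫ x, χ x ∂μ := by
    simpa only [map_mul, integral_const_mul] using integral_mul_left_eq_self (μ := μ) χ g
  by_contra integral_ne_zero
  exact hg ((mul_eq_right₀ integral_ne_zero).mp translate)

variable {G H : Type*} [Group G] [TopologicalSpace G] [Group H] [TopologicalSpace H]

theorem integral_character_eq_zero [MeasurableSpace G] [MeasurableMul G] (μ : Measure G)
    [μ.IsMulLeftInvariant] {χ : G →ₜ* Circle} (hχ : χ ≠ 1) : ∫ x, (χ x : ℂ) ∂μ = 0 := by
  refine integral_monoidHom_eq_zero μ (χ := Circle.coeHom.comp χ.toMonoidHom) fun h => hχ ?_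
  ext x
  exact DFunLike.congr_fun h x

/-- A unitary character regarded as a complex-valued continuous function, so that the integral and
the Stone–Weierstrass theorem apply to it. -/
def characterFunction : (H →ₜ* Circle) →* C(H, ℂ) where
  toFun χ := ⟨fun x => χ x, by fun_prop⟩
  map_one' := by ext; simp
  map_mul' χ ψ := by ext; simp

theorem star_characterFunction (χ : H →ₜ* Circle) :
    star (characterFunction χ) = characterFunction χ⁻¹ := by
  ext x
  exact (Circle.coe_inv_eq_conj (χ x)).symm

variable [CompactSpace H] {Γ : Subgroup (H →ₜ* Circle)}

theorem topologicalClosure_span_characterFunction_eq_top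
    (hsep : ∀ x y : H, x ≠ y → ∃ χ ∈ Γ, χ x ≠ χ y) :
    (Submodule.span ℂ (characterFunction '' (Γ : Set (H →ₜ* Circle)))).topologicalClosure = ⊤ := by
  refine topologicalClosure_span_submonoid_eq_top (S := Γ.toSubmonoid.map characterFunction)
    ?_ fun x y hxy => ?_
  · rintro _ ⟨χ, hχ, rfl⟩
    exact ⟨χ⁻¹, Γ.inv_mem hχ, (star_characterFunction χ).symm⟩
  · obtain ⟨χ, hχ, hχxy⟩ := hsep x y hxy
    exact ⟨_, ⟨χ, hχ, rfl⟩, fun h => hχxy (Circle.ext h)⟩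

variable [MeasurableSpace G] [BorelSpace G] [ContinuousMul G]
  [MeasurableSpace H] [BorelSpace H] [ContinuousMul H]

theorem tendsto_integral_comp_of_eventually_character_comp_ne_one {κ : Type*} {l : Filter κ}
    (μ : Measure G) [μ.IsMulLeftInvariant] [IsProbabilityMeasure μ]
    (ν : Measure H) [ν.IsMulLeftInvariant] [IsProbabilityMeasure ν] {φ : κ → G →ₜ* H}
    (hsep : ∀ x y : H, x ≠ y → ∃ χ ∈ Γ, χ x ≠ χ y)
    (hφ : ∀ χ ∈ Γ, χ ≠ 1 → ∀ᶠ k in l, χ.comp (φ k) ≠ 1) (f : C(H, ℂ)) :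
    Tendsto (fun k => ∫ z, f (φ k z) ∂μ) l (𝓝 (∫ x, f x ∂ν)) := by
  have measurable_hom (k : κ) : AEMeasurable (φ k) μ := (map_continuous (φ k)).aemeasurable
  have (k : κ) : IsProbabilityMeasure (μ.map (φ k)) :=
    Measure.isProbabilityMeasure_map (measurable_hom k)
  have integral_pushforward (g : C(H, ℂ)) (k : κ) :
      ∫ x, g x ∂μ.map (φ k) = ∫ z, g (φ k z) ∂μ :=
    integral_map (measurable_hom k) g.continuous.aestronglyMeasurable
  simp only [← integral_pushforward]
  refine tendsto_integral_of_topologicalClosure_span_eq_top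
    (topologicalClosure_span_characterFunction_eq_top hsep) ?_ f
  rintro _ ⟨χ, hχ, rfl⟩
  by_cases trivial_character : χ = 1
  · simpa [trivial_character] using tendsto_const_nhds
  · refine tendsto_nhds_of_eventually_eq ?_
    filter_upwards [hφ χ hχ trivial_character] with k hk
    rw [integral_pushforward]
    exact (integral_character_eq_zero μ hk).trans
      (integral_character_eq_zero ν trivial_character).symm

end Characters

theorem eventually_sum_mul_natCast_pow_ne_zero {R : Type*} [CommRing R] [IsDomain R] [CharZero R]
    {N : ℕ} {a : Fin N → R} (ha : a ≠ 0) :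
    ∀ᶠ k : ℕ in atTop, ∑ i, a i * (k : R) ^ (i : ℕ) ≠ 0 := by
  classical
  have poly_ne_zero : Polynomial.ofFn N a ≠ 0 :=
    (map_ne_zero_iff _ (Polynomial.injective_ofFn N)).mpr ha
  have roots_finite : {k : ℕ | (Polynomial.ofFn N a).IsRoot (k : R)}.Finite :=
    (Polynomial.finite_setOfPred_isRoot poly_ne_zero).preimage Nat.cast_injective.injOn
  filter_upwards [Nat.cofinite_eq_atTop ▸ roots_finite.eventually_cofinite_notMem] with k hk
  simpa [Polynomial.IsRoot, Polynomial.ofFn_eq_sum_monomial, Polynomial.eval_finsetSum] using hk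

theorem zpow_finsetSum {ι G : Type*} [CommGroup G] (g : G) (s : Finset ι) (e : ι → ℤ) :
    g ^ ∑ i ∈ s, e i = ∏ i ∈ s, g ^ e i :=
  map_sum (zmultiplesHom (Additive G) (Additive.ofMul g)) e s

section Torus

variable {ι : Type*}

/-- The closed one-parameter subgroup `z ↦ (z ^ n i)ᵢ` of the torus with winding numbers `n`. -/
def torusWinding (n : ι → ℤ) : Circle →ₜ* (ι → Circle) where
  toFun z i := z ^ n i
  map_one' := by ext; simp
  map_mul' z w := by ext; simp [mul_zpow]
  continuous_toFun := by fun_prop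

theorem torusWinding_natCast (n : ι → ℕ) (z : Circle) :
    torusWinding (fun i => (n i : ℤ)) z = fun i => z ^ n i :=
  funext fun i => zpow_natCast z (n i)

variable [Fintype ι]

/-- The character `x ↦ ∏ i, x i ^ a i` of the torus, as a homomorphism in the exponent `a`. -/
def torusCharacter : Multiplicative (ι → ℤ) →* ((ι → Circle) →ₜ* Circle) where
  toFun a :=
    { toFun := fun x => ∏ i, x i ^ a.toAdd i
      map_one' := by simp
      map_mul' := fun x y => by simp [mul_zpow, Finset.prod_mul_distrib]
      continuous_toFun := by fun_prop }
  map_one' := ContinuousMonoidHom.ext fun x =>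
    Finset.prod_eq_one fun i (_ : i ∈ Finset.univ) => zpow_zero (x i)
  map_mul' a b := ContinuousMonoidHom.ext fun x =>
    (Finset.prod_congr rfl fun i _ => zpow_add (x i) (a.toAdd i) (b.toAdd i)).trans
      Finset.prod_mul_distrib

theorem torusCharacter_apply (a : Multiplicative (ι → ℤ)) (x : ι → Circle) :
    torusCharacter a x = ∏ i, x i ^ a.toAdd i := rfl

theorem torusCharacter_single [DecidableEq ι] (i : ι) (x : ι → Circle) :
    torusCharacter (.ofAdd (Pi.single i 1)) x = x i := by
  simp [torusCharacter_apply, Pi.single_apply]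

theorem torusCharacter_torusWinding (a : Multiplicative (ι → ℤ)) (n : ι → ℤ) (z : Circle) :
    torusCharacter a (torusWinding n z) = z ^ ∑ i, a.toAdd i * n i := by
  rw [zpow_finsetSum, torusCharacter_apply]
  exact Finset.prod_congr rfl fun i _ => (zpow_mul' z (a.toAdd i) (n i)).symm

theorem exists_circle_zpow_ne_one {e : ℤ} (he : e ≠ 0) : ∃ z : Circle, z ^ e ≠ 1 := by
  refine ⟨Circle.exp (Real.pi / e), ?_⟩
  have he' : (e : ℝ) ≠ 0 := mod_cast he
  rw [← Circle.exp_zsmul, zsmul_eq_mul, mul_div_cancel₀ _ he']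
  exact Circle.exp_pi_ne_one

theorem torusCharacter_comp_torusWinding_ne_one {a : Multiplicative (ι → ℤ)} {n : ι → ℤ}
    (h : ∑ i, a.toAdd i * n i ≠ 0) : (torusCharacter a).comp (torusWinding n) ≠ 1 := by
  obtain ⟨z, hz⟩ := exists_circle_zpow_ne_one h
  refine DFunLike.ne_iff.mpr ⟨z, ?_⟩
  rwa [ContinuousMonoidHom.coe_comp, Function.comp_apply, torusCharacter_torusWinding]

variable [MeasurableSpace Circle] [BorelSpace Circle] (m : Measure Circle)
  [m.IsMulLeftInvariant] [IsProbabilityMeasure m]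

theorem tendsto_integral_torusWinding {κ : Type*} {l : Filter κ} {n : κ → ι → ℤ}
    (hn : ∀ a : ι → ℤ, a ≠ 0 → ∀ᶠ k in l, ∑ i, a i * n k i ≠ 0)
    (f : C(ι → Circle, ℂ)) :
    Tendsto (fun k => ∫ z, f (torusWinding (n k) z) ∂m) l
      (𝓝 (∫ x, f x ∂Measure.pi fun _ => m)) := by
  classical
  refine tendsto_integral_comp_of_eventually_character_comp_ne_one (Γ := torusCharacter.range)
    m _ (fun x y hxy => ?_) ?_ f
  · obtain ⟨i, hi⟩ := Function.ne_iff.mp hxy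
    exact ⟨_, ⟨.ofAdd (Pi.single i 1), rfl⟩, by rwa [torusCharacter_single, torusCharacter_single]⟩
  · rintro _ ⟨a, rfl⟩ ha
    have exponent_ne_zero : a.toAdd ≠ 0 :=
      fun h => ha ((congrArg torusCharacter h).trans (map_one _))
    filter_upwards [hn _ exponent_ne_zero] with k hk
    exact torusCharacter_comp_torusWinding_ne_one hk

theorem tendsto_integral_comp_circle_pow_pow {N : ℕ} {f : (Fin N → Circle) → ℝ}
    (hf : Continuous f) :
    Tendsto (fun k : ℕ => ∫ z, f (fun i => z ^ k ^ (i : ℕ)) ∂m) atTop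
      (𝓝 (∫ x, f x ∂Measure.pi fun _ => m)) := by
  have tendsto_winding := tendsto_integral_torusWinding m (l := atTop)
    (n := fun (k : ℕ) (i : Fin N) => (k : ℤ) ^ (i : ℕ))
    (fun _ ha => eventually_sum_mul_natCast_pow_ne_zero ha)
    ⟨fun x => (f x : ℂ), by fun_prop⟩
  simpa only [torusWinding_natCast, ContinuousMap.coe_mk, integral_complex_ofReal,
    tendsto_ofReal_iff, ← Nat.cast_pow] using tendsto_winding

end Torus

theorem two_mul_pow_lt_pow_succ {k : ℕ} (hk : 3 ≤ k) (i : ℕ) : 2 * k ^ i < k ^ (i + 1) := by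
  rw [pow_succ']
  exact Nat.mul_lt_mul_of_pos_right (by omega) (by positivity)

/-- for continuous `f : 𝕋^N → ℝ` (with `m` the normalized Haar probability
measure on the circle `𝕋`) and any `δ > 0` there is a lacunary tuple
`n₁ < n₂ < … < n_N` (with `2nᵢ < nᵢ₊₁`) of positive integers such that
`∫ f(z^{n₁},…,z^{n_N}) dm(z) ≤ ∫_{𝕋^N} f dm^N + δ`. -/
theorem stmt_10 [MeasurableSpace Circle] [BorelSpace Circle]
    (m : Measure Circle) [m.IsHaarMeasure] [IsProbabilityMeasure m]
    (N : ℕ) (hN : 1 ≤ N) (f : (Fin N → Circle) → ℝ) (hf : Continuous f)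
    (δ : ℝ) (hδ : 0 < δ) :
    ∃ n : Fin N → ℕ, (∀ i, 0 < n i) ∧
      (∀ (i : Fin N) (h : (i : ℕ) + 1 < N), 2 * n i < n ⟨(i : ℕ) + 1, h⟩) ∧
      (∫ z, f (fun i => z ^ (n i)) ∂m)
        ≤ (∫ x, f x ∂(Measure.pi fun _ : Fin N => m)) + δ := by
  have limit_lt : ∫ x, f x ∂(Measure.pi fun _ : Fin N => m) <
      (∫ x, f x ∂(Measure.pi fun _ : Fin N => m)) + δ := lt_add_of_pos_right _ hδ
  have eventually_lt := (tendsto_integral_comp_circle_pow_pow m hf).eventually_lt_const limit_lt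
  obtain ⟨k, integral_lt, three_le⟩ := (eventually_lt.and (eventually_ge_atTop 3)).exists
  exact ⟨fun i => k ^ (i : ℕ), fun i => by positivity,
    fun i _ => two_mul_pow_lt_pow_succ three_le i, integral_lt.le⟩
end
end

section
/- Let S and T be finite nonempty sets and let H be a complex Hilbert space. Let B : (S → H) × (T → ℂ) → ℂ be a bilinear form such that for every n ≥ 1 and all families φ₁,…,φ_n : S → H and η₁,…,η_n : T → ℂ one has |Σ_{k=1}^n B(φ_k, η_k)| ≤ sup_{s∈S} (Σ_{k=1}^n ‖φ_k(s)‖²)^{1/2} · sup_{t∈T} (Σ_{k=1}^n |η_k(t)|²)^{1/2}. Then there exist weights P : S → [0,∞) and Q : T → [0,∞) with Σ_{s∈S} P(s) = 1 and Σ_{t∈T} Q(t) = 1 such that for every φ : S → H and η : T → ℂ, |B(φ, η)| ≤ (Σ_{s∈S} P(s) ‖φ(s)‖²)^{1/2} · (Σ_{t∈T} Q(t) |η(t)|²)^{1/2}. -/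
open scoped ENNReal NNReal
open MeasureTheory ContinuousLinearMap

noncomputable section

/-!
Grothendieck–Pietsch separation. For `r ≥ 0`, scaling `v` and `w` by `√r` scales the AM-GM defects
`p s v ^ 2 + q t w ^ 2 - 2 * re (B v w)`, as functions of `(s, t)`, by `r`. Hence a convex
combination of defects is a sum of defects, and evaluating it where both suprema are attained shows
that it is not everywhere negative. Hahn–Banach separates the convex hull of the defects from the
open negative orthant by a probability weight on `S × T`, whose marginals are the required weights.
Replacing `v` by `r • v` and optimizing over the scalar `r` turns the resulting additive inequality
into the multiplicative one.
-/

section Separation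

variable {ι : Type*} {f : (ι → ℝ) →ₗ[ℝ] ℝ} {u : ℝ}

lemma map_nonneg_of_forall_neg_map_lt (hf : ∀ x : ι → ℝ, (∀ i, x i < 0) → f x < u)
    {x : ι → ℝ} (hx : 0 ≤ x) : 0 ≤ f x := by
  by_contra! hfx
  -- `f` would exceed `u` far out on the ray from `-1` in direction `-x`.
  set r := (|u| + |f 1|) / -f x
  have hr : 0 ≤ r := div_nonneg (by positivity) (by linarith)
  have hrf : r * -f x = |u| + |f 1| := div_mul_cancel₀ _ (by linarith)
  have hlt : f (-1 - r • x) < u := hf _ fun i ↦ by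
    have : 0 ≤ r * x i := mul_nonneg hr (hx i)
    simp only [Pi.sub_apply, Pi.neg_apply, Pi.one_apply, Pi.smul_apply, smul_eq_mul]
    linarith
  rw [map_sub, map_neg, map_smul, smul_eq_mul] at hlt
  linarith [le_abs_self u, le_abs_self (f 1)]

lemma nonneg_of_forall_neg_map_lt (hf : ∀ x : ι → ℝ, (∀ i, x i < 0) → f x < u) : 0 ≤ u := by
  by_contra! hu
  have hf_one : 0 < f 1 := by
    have := hf (-1) fun _ ↦ by simp
    rw [map_neg] at this
    linarith
  have hlt : f ((u / f 1) • 1) < u := hf _ fun _ ↦ by simpa using div_neg_of_neg_of_pos hu hf_one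
  rw [map_smul, smul_eq_mul, div_mul_cancel₀ _ hf_one.ne'] at hlt
  exact hlt.false

variable [Fintype ι]

lemma map_le_norm_mul_map_one (hf : ∀ x, 0 ≤ x → 0 ≤ f x) (x : ι → ℝ) : f x ≤ ‖x‖ * f 1 := by
  have h : 0 ≤ f (‖x‖ • 1 - x) := hf _ fun i ↦ by
    simpa using (le_abs_self _).trans (norm_le_pi_norm x i)
  rwa [map_sub, map_smul, smul_eq_mul, sub_nonneg] at h

lemma exists_stdSimplex_map_eq_mul_dotProduct (hf : ∀ x, 0 ≤ x → 0 ≤ f x) (hf_one : 0 < f 1) :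
    ∃ w : stdSimplex ℝ ι, ∀ x, f x = f 1 * (w ⬝ᵥ x) := by
  classical
  have hf_sum (x : ι → ℝ) : f x = ∑ i, f (Pi.single i 1) * x i := by
    conv_lhs => rw [pi_eq_sum_univ' x]
    simp only [map_sum, map_smul, smul_eq_mul, mul_comm]
  refine ⟨⟨fun i ↦ f (Pi.single i 1) / f 1, fun i ↦ ?_, ?_⟩, fun x ↦ ?_⟩
  · exact div_nonneg (hf _ (Pi.single_nonneg.2 zero_le_one)) hf_one.le
  · rw [← Finset.sum_div, div_eq_one_iff_eq hf_one.ne', hf_sum 1]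
    simp
  · rw [hf_sum x, dotProduct, Finset.mul_sum]
    refine Finset.sum_congr rfl fun i _ ↦ ?_
    change _ = f 1 * (f (Pi.single i 1) / f 1 * x i)
    field_simp

theorem exists_stdSimplex_dotProduct_nonneg {C : Set (ι → ℝ)} (hC : Convex ℝ C)
    (hC_nonempty : C.Nonempty) (hC_nonneg : ∀ x ∈ C, ∃ i, 0 ≤ x i) :
    ∃ w : stdSimplex ℝ ι, ∀ x ∈ C, 0 ≤ w ⬝ᵥ x := by
  let N : Set (ι → ℝ) := Set.univ.pi fun _ ↦ Set.Iio 0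
  have hN : Convex ℝ N := convex_pi fun _ _ ↦ convex_Iio 0
  have hN_open : IsOpen N := isOpen_set_pi Set.finite_univ fun _ _ ↦ isOpen_Iio
  have hNC : Disjoint N C := Set.disjoint_left.2 fun x hxN hxC ↦
    let ⟨i, hi⟩ := hC_nonneg x hxC
    hi.not_gt (hxN i trivial)
  obtain ⟨f, u, hfN, hfC⟩ := geometric_hahn_banach_open hN hN_open hC hNC
  have hf_lt (x : ι → ℝ) (hx : ∀ i, x i < 0) : f.toLinearMap x < u := hfN x fun i _ ↦ hx i
  have hu : 0 ≤ u := nonneg_of_forall_neg_map_lt hf_lt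
  have hf_nonneg (x : ι → ℝ) (hx : 0 ≤ x) : 0 ≤ f.toLinearMap x :=
    map_nonneg_of_forall_neg_map_lt hf_lt hx
  have hf_one : 0 < f.toLinearMap 1 := by
    refine (hf_nonneg 1 zero_le_one).lt_of_ne' fun hf_one ↦ ?_
    obtain ⟨x, hx⟩ := hC_nonempty
    have hneg : f.toLinearMap (-1) < u := hf_lt _ fun _ ↦ by simp
    have hle : f.toLinearMap x ≤ ‖x‖ * f.toLinearMap 1 := map_le_norm_mul_map_one hf_nonneg x
    rw [map_neg, hf_one, neg_zero] at hneg
    rw [hf_one, mul_zero] at hle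
    exact ((hfC x hx).trans hle).not_gt hneg
  obtain ⟨w, hw⟩ := exists_stdSimplex_map_eq_mul_dotProduct hf_nonneg hf_one
  refine ⟨w, fun x hx ↦ nonneg_of_mul_nonneg_right ?_ hf_one⟩
  rw [← hw x]
  exact hu.trans (hfC x hx)

end Separation

lemma sum_stdSimplex_map_mul {R ι κ : Type*} [Semiring R] [PartialOrder R] [IsOrderedRing R]
    [Fintype ι] [Fintype κ] (w : stdSimplex R ι) (g : ι → κ) (a : κ → R) :
    ∑ j, stdSimplex.map g w j * a j = ∑ i, w i * a (g i) := by
  classical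
  simp only [stdSimplex.map_coe, FunOnFinite.linearMap_apply_apply, Finset.sum_mul]
  rw [← Finset.sum_fiberwise Finset.univ g]
  refine Finset.sum_congr rfl fun j _ ↦ Finset.sum_congr rfl fun i hi ↦ ?_
  rw [(Finset.mem_filter.1 hi).2]

lemma le_sqrt_mul_sqrt_of_forall_two_mul_le {a b c : ℝ} (ha : 0 ≤ a)
    (h : ∀ r : ℝ, 2 * c * r ≤ a * r ^ 2 + b) : c ≤ √a * √b := by
  have hdiscrim : discrim a (-2 * c) b ≤ 0 := discrim_le_zero fun r ↦ by linarith [h r]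
  rw [← Real.sqrt_mul ha]
  apply Real.le_sqrt_of_sq_le
  rw [discrim] at hdiscrim
  linarith

section Bilinear

open RCLike

variable {𝕜 V W : Type*} [RCLike 𝕜] [AddCommGroup V] [Module 𝕜 V] [AddCommGroup W] [Module 𝕜 W]

lemma norm_le_sqrt_mul_sqrt_of_two_mul_re_le (B : V →ₗ[𝕜] W →ₗ[𝕜] 𝕜) {a : V → ℝ} {b : W → ℝ}
    (ha : ∀ v, 0 ≤ a v) (ha_smul : ∀ (c : 𝕜) v, a (c • v) = ‖c‖ ^ 2 * a v)
    (h : ∀ v w, 2 * re (B v w) ≤ a v + b w) (v : V) (w : W) :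
    ‖B v w‖ ≤ √(a v) * √(b w) := by
  obtain ⟨c, hc, hcB⟩ := exists_norm_eq_mul_self (B v w)
  refine le_sqrt_mul_sqrt_of_forall_two_mul_le (ha v) fun r ↦ ?_
  have ha_r : a (((r : 𝕜) * c) • v) = a v * r ^ 2 := by
    rw [ha_smul, norm_mul, hc, norm_ofReal, mul_one, sq_abs, mul_comm]
  have hB_r : re (B (((r : 𝕜) * c) • v) w) = r * ‖B v w‖ := by
    rw [map_smul, LinearMap.smul_apply, smul_eq_mul, mul_assoc, ← hcB, ← ofReal_mul, ofReal_re]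
  have := h (((r : 𝕜) * c) • v) w
  rw [ha_r, hB_r] at this
  linarith

variable {S T : Type*}

/-- The amount by which `2 * re (B v w) ≤ p s v ^ 2 + q t w ^ 2` holds, as a function of `(s, t)`.
The required weights come from separating these functions from the negative orthant. -/
def amgmDefect (B : V →ₗ[𝕜] W →ₗ[𝕜] 𝕜) (p : S → Seminorm 𝕜 V) (q : T → Seminorm 𝕜 W)
    (v : V) (w : W) (i : S × T) : ℝ :=
  p i.1 v ^ 2 + q i.2 w ^ 2 - 2 * re (B v w)

variable (B : V →ₗ[𝕜] W →ₗ[𝕜] 𝕜) (p : S → Seminorm 𝕜 V) (q : T → Seminorm 𝕜 W)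

lemma amgmDefect_sqrt_smul {r : ℝ} (hr : 0 ≤ r) (v : V) (w : W) :
    amgmDefect B p q ((√r : 𝕜) • v) ((√r : 𝕜) • w) = r • amgmDefect B p q v w := by
  have hB : re (B ((√r : 𝕜) • v) ((√r : 𝕜) • w)) = r * re (B v w) := by
    rw [LinearMap.map_smul₂, LinearMap.map_smul, smul_smul, ← ofReal_mul, Real.mul_self_sqrt hr,
      smul_eq_mul, re_ofReal_mul]
  funext i
  simp only [amgmDefect, hB, map_smul_eq_mul, norm_ofReal, mul_pow, sq_abs, Real.sq_sqrt hr,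
    Pi.smul_apply, smul_eq_mul]
  ring

lemma exists_sum_amgmDefect_nonneg [Finite S] [Finite T] [Nonempty S] [Nonempty T]
    {κ : Type*} [Fintype κ] {v : κ → V} {w : κ → W}
    (h : ‖∑ k, B (v k) (w k)‖ ≤
      (⨆ s, √(∑ k, p s (v k) ^ 2)) * (⨆ t, √(∑ k, q t (w k) ^ 2))) :
    ∃ i, 0 ≤ (∑ k, amgmDefect B p q (v k) (w k)) i := by
  obtain ⟨s, hs⟩ := exists_eq_ciSup_of_finite (f := fun s ↦ √(∑ k, p s (v k) ^ 2))
  obtain ⟨t, ht⟩ := exists_eq_ciSup_of_finite (f := fun t ↦ √(∑ k, q t (w k) ^ 2))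
  rw [← hs, ← ht] at h
  refine ⟨(s, t), ?_⟩
  have hsum : (∑ k, amgmDefect B p q (v k) (w k)) (s, t) =
      ∑ k, p s (v k) ^ 2 + ∑ k, q t (w k) ^ 2 - 2 * re (∑ k, B (v k) (w k)) := by
    simp only [Finset.sum_apply, amgmDefect, Finset.sum_sub_distrib, Finset.sum_add_distrib,
      ← Finset.mul_sum, map_sum]
  rw [hsum, sub_nonneg]
  calc 2 * re (∑ k, B (v k) (w k))
      ≤ 2 * (√(∑ k, p s (v k) ^ 2) * √(∑ k, q t (w k) ^ 2)) := by
        gcongr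
        exact (re_le_norm _).trans h
    _ ≤ √(∑ k, p s (v k) ^ 2) ^ 2 + √(∑ k, q t (w k) ^ 2) ^ 2 := by
        rw [← mul_assoc]
        exact two_mul_le_add_sq _ _
    _ = ∑ k, p s (v k) ^ 2 + ∑ k, q t (w k) ^ 2 := by
        rw [Real.sq_sqrt (by positivity), Real.sq_sqrt (by positivity)]

lemma exists_sum_amgmDefect_eq_of_mem_convexHull {x : S × T → ℝ}
    (hx : x ∈ convexHull ℝ (Set.range (amgmDefect B p q).uncurry)) :
    ∃ (n : ℕ) (v : Fin n → V) (w : Fin n → W), ∑ k, amgmDefect B p q (v k) (w k) = x := by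
  obtain ⟨κ, _, c, z, hc, -, hz, rfl⟩ := mem_convexHull_iff_exists_fintype.1 hx
  choose y hy using hz
  let e := (Fintype.equivFin κ).symm
  refine ⟨Fintype.card κ, fun k ↦ (√(c (e k)) : 𝕜) • (y (e k)).1,
    fun k ↦ (√(c (e k)) : 𝕜) • (y (e k)).2, ?_⟩
  rw [← Equiv.sum_comp e fun k ↦ c k • z k]
  simp only [amgmDefect_sqrt_smul B p q (hc _), ← hy, Function.uncurry]

variable [Fintype S] [Fintype T]

lemma stdSimplex_dotProduct_amgmDefect (μ : stdSimplex ℝ (S × T)) (v : V) (w : W) :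
    μ ⬝ᵥ amgmDefect B p q v w =
      ∑ s, stdSimplex.map Prod.fst μ s * p s v ^ 2 +
        ∑ t, stdSimplex.map Prod.snd μ t * q t w ^ 2 - 2 * re (B v w) := by
  simp only [dotProduct, amgmDefect, mul_sub, mul_add, Finset.sum_sub_distrib,
    Finset.sum_add_distrib, ← Finset.sum_mul, stdSimplex.sum_eq_one, one_mul,
    sum_stdSimplex_map_mul μ Prod.fst fun s ↦ p s v ^ 2,
    sum_stdSimplex_map_mul μ Prod.snd fun t ↦ q t w ^ 2]

theorem stmt_11_general [Nonempty S] [Nonempty T]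
    (hB : ∀ (n : ℕ) (v : Fin n → V) (w : Fin n → W),
      ‖∑ k, B (v k) (w k)‖ ≤
        (⨆ s, √(∑ k, p s (v k) ^ 2)) * (⨆ t, √(∑ k, q t (w k) ^ 2))) :
    ∃ (P : S → ℝ) (Q : T → ℝ), (∀ s, 0 ≤ P s) ∧ (∀ t, 0 ≤ Q t) ∧
      ∑ s, P s = 1 ∧ ∑ t, Q t = 1 ∧
      ∀ v w, ‖B v w‖ ≤ √(∑ s, P s * p s v ^ 2) * √(∑ t, Q t * q t w ^ 2) := by
  obtain ⟨μ, hμ⟩ := exists_stdSimplex_dotProduct_nonneg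
    (convex_convexHull ℝ (Set.range (amgmDefect B p q).uncurry))
    (Set.range_nonempty _).convexHull fun x hx ↦ by
      obtain ⟨n, v, w, rfl⟩ := exists_sum_amgmDefect_eq_of_mem_convexHull B p q hx
      exact exists_sum_amgmDefect_nonneg B p q (hB n v w)
  let P := stdSimplex.map Prod.fst μ
  let Q := stdSimplex.map Prod.snd μ
  refine ⟨P, Q, P.2.1, Q.2.1, P.2.2, Q.2.2, norm_le_sqrt_mul_sqrt_of_two_mul_re_le B
    (a := fun v ↦ ∑ s, P s * p s v ^ 2) (b := fun w ↦ ∑ t, Q t * q t w ^ 2)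
    (fun v ↦ ?_) (fun c v ↦ ?_) fun v w ↦ ?_⟩
  · exact Finset.sum_nonneg fun s _ ↦ mul_nonneg (P.2.1 s) (sq_nonneg _)
  · simp only [map_smul_eq_mul, mul_pow, Finset.mul_sum, mul_left_comm]
  · have := hμ _ (subset_convexHull ℝ _ ⟨(v, w), rfl⟩)
    rwa [Function.uncurry_apply_pair, stdSimplex_dotProduct_amgmDefect, sub_nonneg] at this

end Bilinear

/-- a Grothendieck–Pietsch style separation lemma: if a bilinear form
`B : (S → H) × (T → ℂ) → ℂ` satisfies
`|Σ_k B(φ_k, η_k)| ≤ sup_s (Σ_k ‖φ_k(s)‖²)^{1/2} · sup_t (Σ_k |η_k(t)|²)^{1/2}`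
for all finite families, then there are probability weights `P` on `S` and `Q` on `T`
with `|B(φ,η)| ≤ (Σ_s P(s)‖φ(s)‖²)^{1/2} (Σ_t Q(t)|η(t)|²)^{1/2}`. -/
theorem stmt_11 {S T : Type*} [Fintype S] [Fintype T] [Nonempty S] [Nonempty T]
    (H : Type*) [NormedAddCommGroup H] [InnerProductSpace ℂ H]
    (B : (S → H) →ₗ[ℂ] (T → ℂ) →ₗ[ℂ] ℂ)
    (hB : ∀ (n : ℕ) (φ : Fin n → S → H) (η : Fin n → T → ℂ),
      ‖∑ k, B (φ k) (η k)‖ ≤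
        (⨆ s : S, Real.sqrt (∑ k, ‖φ k s‖ ^ 2)) *
        (⨆ t : T, Real.sqrt (∑ k, ‖η k t‖ ^ 2))) :
    ∃ (P : S → ℝ) (Q : T → ℝ), (∀ s, 0 ≤ P s) ∧ (∀ t, 0 ≤ Q t) ∧
      (∑ s, P s) = 1 ∧ (∑ t, Q t) = 1 ∧
      ∀ (φ : S → H) (η : T → ℂ),
        ‖B φ η‖ ≤ Real.sqrt (∑ s, P s * ‖φ s‖ ^ 2) *
          Real.sqrt (∑ t, Q t * ‖η t‖ ^ 2) :=
  stmt_11_general B (fun s ↦ (normSeminorm ℂ H).comp (LinearMap.proj s))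
    (fun t ↦ (normSeminorm ℂ ℂ).comp (LinearMap.proj t)) hB
end
end

section
/- Let N ≥ 1 and m ≥ 1, let M = M_N(ℂ) be the N × N complex matrices with the operator norm (acting on ℓ²-norm on ℂ^N), and let M* be its dual Banach space. Let a₁,…,a_m ∈ M and ξ₁,…,ξ_m ∈ M*. Let μ be the product over Fin m of the normalized Haar probability measure on the circle 𝕋 = {z ∈ ℂ : |z|=1}. Then |Σ_{j=1}^m ξ_j(a_j)| ≤ ( ∫_{𝕋^m} ‖Σ_{j=1}^m z_j ξ_j‖_{M*} dμ(z) ) · ( ‖Σ_{j=1}^m a_j* a_j‖^{1/2} + ‖Σ_{j=1}^m a_j a_j*‖^{1/2} ). -/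
open scoped ENNReal NNReal
open MeasureTheory ContinuousLinearMap

noncomputable section

/-!
Let `Y = ∑ e_j a_j` be a random sum along a Steinhaus system `e`. The truncation
`Y (1 + t Y* Y)⁻¹` is bounded by `1 / (2 √t)`, so pairing it with `∑ conj(e_j) ξ_j` costs at most
`I / (2 √t)`, where `I` is the integral of the norm of that sum. By Bessel's inequality and the
fourth moment of `Y`, the coefficients of the remainder have row-column norm at most `√t / 2` times
the square of the row-column norm of `a`. Choosing `t` to balance the two errors shows that if `C`
is an admissible constant, then so is `(I + C) / 2`; hence the best constant is at most `I`.
-/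

section RandomSums

variable {X ι : Type*} [Fintype ι]

/-- The random vector `x ↦ ∑ j, e j x • a j` with scalar random variables `e j` and
coefficients `a j`. -/
def randomSum {E : Type*} [AddCommMonoid E] [SMul ℂ E] (e : ι → X → ℂ) (a : ι → E) (x : X) : E :=
  ∑ j, e j x • a j

/-- The coefficients `j ↦ ∫ star (e j) • Z` of a vector-valued function `Z` along the system `e`;
for an orthonormal system they recover the coefficients of a `randomSum`. -/
def randomCoeff {E κ : Type*} [NormedAddCommGroup E] [NormedSpace ℂ E] [MeasurableSpace X]
    (μ : Measure X) (e : κ → X → ℂ) (Z : X → E) (j : κ) : E :=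
  ∫ x, star (e j x) • Z x ∂μ

theorem star_randomSum {A : Type*} [AddCommMonoid A] [StarAddMonoid A] [SMul ℂ A] [StarModule ℂ A]
    (e : ι → X → ℂ) (a : ι → A) (x : X) :
    star (randomSum e a x) = randomSum (star e) (star a) x := by
  simp only [randomSum, star_sum, star_smul, Pi.star_apply]

theorem star_randomCoeff {A κ : Type*} [NonUnitalCStarAlgebra A] [MeasurableSpace X]
    (μ : Measure X) (e : κ → X → ℂ) (Z : X → A) :
    star (randomCoeff μ e Z) = randomCoeff μ (star e) (star Z) := by
  funext j
  simp only [randomCoeff, Pi.star_apply, ← star_smul]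
  exact ((starL' ℝ (A := A)).integral_comp_comm fun x => star (e j x) • Z x).symm

variable [TopologicalSpace X]

theorem continuous_randomSum {E : Type*} [NormedAddCommGroup E] [NormedSpace ℂ E] {e : ι → X → ℂ}
    (he : ∀ j, Continuous (e j)) (a : ι → E) : Continuous (randomSum e a) :=
  continuous_finsetSum _ fun j _ => (he j).smul continuous_const

variable [CompactSpace X] [MeasurableSpace X] [OpensMeasurableSpace X] {μ : Measure X}
  [IsFiniteMeasure μ]

theorem integrable_of_continuous {E : Type*} [NormedAddCommGroup E] {f : X → E}
    (hf : Continuous f) : Integrable f μ :=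
  hf.integrable_of_hasCompactSupport (HasCompactSupport.of_compactSpace f)

theorem randomCoeff_sub {E κ : Type*} [NormedAddCommGroup E] [NormedSpace ℂ E] {e : κ → X → ℂ}
    (he : ∀ j, Continuous (e j)) {Y Z : X → E} (hY : Continuous Y) (hZ : Continuous Z) :
    randomCoeff μ e (Y - Z) = randomCoeff μ e Y - randomCoeff μ e Z := by
  funext j
  simp only [randomCoeff, Pi.sub_apply, smul_sub]
  exact integral_sub (integrable_of_continuous ((he j).star.smul hY))
    (integrable_of_continuous ((he j).star.smul hZ))

theorem randomCoeff_randomSum {E : Type*} [NormedAddCommGroup E] [NormedSpace ℂ E]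
    [CompleteSpace E] [DecidableEq ι] {e : ι → X → ℂ} (he : ∀ j, Continuous (e j))
    (horth : ∀ i j, ∫ x, star (e i x) * e j x ∂μ = if i = j then 1 else 0) (a : ι → E) :
    randomCoeff μ e (randomSum e a) = a := by
  funext i
  have hint (j : ι) : Integrable (fun x => (star (e i x) * e j x) • a j) μ :=
    integrable_of_continuous (((he i).star.mul (he j)).smul continuous_const)
  simp only [randomCoeff, randomSum, Finset.smul_sum, smul_smul]
  rw [integral_finsetSum _ fun j _ => hint j]
  simp only [integral_smul_const, horth, ite_smul, one_smul, zero_smul, Finset.sum_ite_eq,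
    Finset.mem_univ, if_true]

theorem norm_sum_apply_randomCoeff_le {E F : Type*} [NormedAddCommGroup E] [NormedSpace ℂ E]
    [CompleteSpace E] [NormedAddCommGroup F] [NormedSpace ℂ F] [CompleteSpace F] {e : ι → X → ℂ}
    (he : ∀ j, Continuous (e j)) (ξ : ι → E →L[ℂ] F) {Z : X → E} (hZ : Continuous Z) {C : ℝ}
    (hC : ∀ x, ‖Z x‖ ≤ C) :
    ‖∑ j, ξ j (randomCoeff μ e Z j)‖ ≤ C * ∫ x, ‖randomSum (star e) ξ x‖ ∂μ := by
  have hξ : Continuous (randomSum (star e) ξ) := continuous_randomSum (fun j => (he j).star) ξ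
  have hcoeff (j : ι) : Integrable (fun x => star (e j x) • Z x) μ :=
    integrable_of_continuous ((he j).star.smul hZ)
  have hpair : ∑ j, ξ j (randomCoeff μ e Z j) = ∫ x, randomSum (star e) ξ x (Z x) ∂μ := by
    simp only [randomSum, Pi.star_apply, _root_.sum_apply, _root_.smul_apply, ← map_smul]
    rw [integral_finsetSum _ fun j _ => (ξ j).integrable_comp (hcoeff j)]
    exact Finset.sum_congr rfl fun j _ => ((ξ j).integral_comp_comm (hcoeff j)).symm
  rw [hpair, ← integral_const_mul]
  refine (norm_integral_le_integral_norm _).trans (integral_mono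
    (integrable_of_continuous (hξ.clm_apply hZ).norm)
    (integrable_of_continuous (continuous_const.mul hξ.norm)) fun x => ?_)
  exact (le_of_opNorm_le_of_le _ le_rfl (hC x)).trans_eq (mul_comm _ _)

variable {A : Type*} [CStarAlgebra A]

theorem integral_star_randomSum_mul {e : ι → X → ℂ} (he : ∀ j, Continuous (e j)) (a : ι → A)
    {Z : X → A} (hZ : Continuous Z) :
    ∫ x, star (randomSum e a x) * Z x ∂μ = ∑ j, star (a j) * randomCoeff μ e Z j := by
  have hcoeff (j : ι) : Integrable (fun x => star (e j x) • Z x) μ :=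
    integrable_of_continuous ((he j).star.smul hZ)
  simp only [randomSum, star_sum, star_smul, Finset.sum_mul, smul_mul_assoc, ← mul_smul_comm]
  rw [integral_finsetSum _ fun j _ => (hcoeff j).const_mul (star (a j))]
  simp only [randomCoeff, integral_const_mul_of_integrable (hcoeff _)]

theorem integral_star_randomSum_mul_randomSum {e : ι → X → ℂ} (he : ∀ j, Continuous (e j))
    (a : ι → A) :
    ∫ x, star (randomSum e a x) * randomSum e a x ∂μ =
      ∑ i, ∑ j, (∫ x, star (e i x) * e j x ∂μ) • (star (a i) * a j) := by
  rw [integral_star_randomSum_mul he a (continuous_randomSum he a)]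
  refine Finset.sum_congr rfl fun i _ => ?_
  have hint (j : ι) : Integrable (fun x => (star (e i x) * e j x) • a j) μ :=
    integrable_of_continuous (((he i).star.mul (he j)).smul continuous_const)
  simp only [randomCoeff, randomSum, Finset.smul_sum, smul_smul]
  rw [integral_finsetSum _ fun j _ => hint j, Finset.mul_sum]
  simp only [integral_smul_const, mul_smul_comm]

end RandomSums

section ColumnSquares

variable {ι : Type*} [Fintype ι]

/-- The column square `∑ j, a_j* a_j` of a finite family in a star ring. The row square
`∑ j, a_j a_j*` is `columnSq (star a)`. -/
def columnSq {A : Type*} [NonUnitalSemiring A] [Star A] (a : ι → A) : A :=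
  ∑ j, star (a j) * a j

/-- The row-column norm `(‖∑ j, a_j* a_j‖ + ‖∑ j, a_j a_j*‖)^{1/2}`. -/
def rowColumnNorm {A : Type*} [NonUnitalCStarAlgebra A] (a : ι → A) : ℝ :=
  √(‖columnSq a‖ + ‖columnSq (star a)‖)

theorem sq_rowColumnNorm {A : Type*} [NonUnitalCStarAlgebra A] (a : ι → A) :
    rowColumnNorm a ^ 2 = ‖columnSq a‖ + ‖columnSq (star a)‖ :=
  Real.sq_sqrt (by positivity)

theorem rowColumnNorm_star {A : Type*} [NonUnitalCStarAlgebra A] (a : ι → A) :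
    rowColumnNorm (star a) = rowColumnNorm a := by
  rw [rowColumnNorm, rowColumnNorm, star_star, add_comm]

theorem isSelfAdjoint_columnSq {A : Type*} [NonUnitalSemiring A] [StarRing A] (a : ι → A) :
    IsSelfAdjoint (columnSq a) := by
  simp only [IsSelfAdjoint, columnSq, star_sum, star_mul, star_star]

theorem columnSq_nonneg {A : Type*} [NonUnitalSemiring A] [PartialOrder A] [StarRing A]
    [StarOrderedRing A] (a : ι → A) : 0 ≤ columnSq a :=
  Finset.sum_nonneg fun j _ => star_mul_self_nonneg (a j)

variable {A : Type*} [CStarAlgebra A] [PartialOrder A] [StarOrderedRing A]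

theorem norm_apply_le_rowColumnNorm (a : ι → A) (j : ι) : ‖a j‖ ≤ rowColumnNorm a := by
  have hle : star (a j) * a j ≤ columnSq a :=
    Finset.single_le_sum (f := fun j => star (a j) * a j)
      (fun i _ => star_mul_self_nonneg (a i)) (Finset.mem_univ j)
  have hnorm := CStarAlgebra.norm_le_norm_of_nonneg_of_le (star_mul_self_nonneg (a j)) hle
  rw [CStarRing.norm_star_mul_self] at hnorm
  refine Real.le_sqrt_of_sq_le ?_
  nlinarith [norm_nonneg (columnSq (star a))]

theorem norm_sum_apply_le_sum_norm_mul_rowColumnNorm {F : Type*} [NormedAddCommGroup F]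
    [NormedSpace ℂ F] (ξ : ι → A →L[ℂ] F) (a : ι → A) :
    ‖∑ j, ξ j (a j)‖ ≤ (∑ j, ‖ξ j‖) * rowColumnNorm a := by
  rw [Finset.sum_mul]
  exact norm_sum_le_of_le _ fun j _ =>
    (ξ j).le_opNorm_of_le (norm_apply_le_rowColumnNorm a j)

theorem columnSq_mul_columnSq_le (a : ι → A) :
    columnSq a * columnSq a ≤ (‖columnSq a‖ * ‖columnSq a‖) • (1 : A) := by
  have h := CStarAlgebra.star_mul_le_algebraMap_norm_sq (a := columnSq a)
  rwa [(isSelfAdjoint_columnSq a).star_eq, Algebra.algebraMap_eq_smul_one, sq] at h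

theorem sum_conjugate_columnSq_star_le (a : ι → A) :
    ∑ j, star (a j) * columnSq (star a) * a j ≤
      (‖columnSq a‖ * ‖columnSq (star a)‖) • (1 : A) := by
  calc ∑ j, star (a j) * columnSq (star a) * a j
      ≤ ∑ j, ‖columnSq (star a)‖ • (star (a j) * a j) := Finset.sum_le_sum fun j _ =>
        CStarAlgebra.star_left_conjugate_le_norm_smul (isSelfAdjoint_columnSq (star a))
    _ = ‖columnSq (star a)‖ • columnSq a := by rw [← Finset.smul_sum]; rfl
    _ ≤ ‖columnSq (star a)‖ • (‖columnSq a‖ • (1 : A)) := by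
        gcongr
        rw [← Algebra.algebraMap_eq_smul_one]
        exact (isSelfAdjoint_columnSq a).le_algebraMap_norm_self
    _ = (‖columnSq a‖ * ‖columnSq (star a)‖) • (1 : A) := by rw [smul_smul, mul_comm]

end ColumnSquares

section Truncation

variable {A : Type*} [CStarAlgebra A]

/-- The truncation `y (1 + t y* y)⁻¹` of `y`. It is bounded by `1 / (2 √t)` for every `y` and
differs from `y` by terms of third order. -/
def resolventTrunc (t : ℝ) (y : A) : A :=
  y * Ring.inverse (1 + t • (star y * y))

variable {t : ℝ}

theorem isUnit_one_add_smul_star_mul_self [PartialOrder A] [StarOrderedRing A] (ht : 0 ≤ t)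
    (y : A) : IsUnit (1 + t • (star y * y)) :=
  CStarAlgebra.isUnit_of_le 1
    (le_add_of_nonneg_right (smul_nonneg ht (star_mul_self_nonneg y))) isStrictlyPositive_one

theorem isSelfAdjoint_one_add_smul_star_mul_self (t : ℝ) (y : A) :
    IsSelfAdjoint (1 + t • (star y * y)) :=
  (IsSelfAdjoint.one A).add ((IsSelfAdjoint.all t).smul (IsSelfAdjoint.star_mul_self y))

variable [PartialOrder A] [StarOrderedRing A]

theorem resolventTrunc_mul (ht : 0 ≤ t) (y : A) :
    resolventTrunc t y * (1 + t • (star y * y)) = y :=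
  Ring.inverse_mul_cancel_right _ _ (isUnit_one_add_smul_star_mul_self ht y)

theorem star_resolventTrunc (ht : 0 ≤ t) (y : A) :
    star (resolventTrunc t y) = resolventTrunc t (star y) := by
  have hcomm : (1 + t • (star y * y)) * star y = star y * (1 + t • (star (star y) * star y)) := by
    simp only [add_mul, mul_add, one_mul, mul_one, smul_mul_assoc, mul_smul_comm, star_star,
      mul_assoc]
  rw [resolventTrunc, star_mul, (isSelfAdjoint_one_add_smul_star_mul_self t y).ringInverse.star_eq,
    Ring.inverse_mul_eq_iff_eq_mul _ _ _ (isUnit_one_add_smul_star_mul_self ht y), resolventTrunc,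
    ← mul_assoc, hcomm, Ring.mul_inverse_cancel_right _ _
      (isUnit_one_add_smul_star_mul_self ht (star y))]

theorem star_resolventTrunc_mul_self_le (ht : 0 < t) (y : A) :
    star (resolventTrunc t y) * resolventTrunc t y ≤ (1 / (4 * t)) • (1 : A) := by
  set c := star y * y with hc
  set u := 1 + t • c with hu
  set v := Ring.inverse u with hv
  have hunit : IsUnit u := isUnit_one_add_smul_star_mul_self ht.le y
  have hvstar : star v = v := (isSelfAdjoint_one_add_smul_star_mul_self t y).ringInverse.star_eq
  have hcstar : star c = c := IsSelfAdjoint.star_mul_self y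
  have hsq : c ≤ (1 / (4 * t)) • (u * u) := by
    have hdiff : (1 / (4 * t)) • (u * u) - c =
        (1 / (4 * t)) • (star (1 - t • c) * (1 - t • c)) := by
      simp only [hu, star_sub, star_one, star_smul, hcstar, star_trivial, mul_add, add_mul,
        mul_sub, sub_mul, mul_one, one_mul, smul_mul_assoc, mul_smul_comm]
      match_scalars
      · field_simp
      · field_simp
        norm_num
      · field_simp
    rw [← sub_nonneg, hdiff]
    exact smul_nonneg (by positivity) (star_mul_self_nonneg _)
  calc star (resolventTrunc t y) * resolventTrunc t y = star v * c * v := by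
        simp only [resolventTrunc, star_mul, hc, hv, hu, mul_assoc]
    _ ≤ star v * ((1 / (4 * t)) • (u * u)) * v := star_left_conjugate_le_conjugate hsq v
    _ = (1 / (4 * t)) • (v * u * (u * v)) := by
        simp only [hvstar, mul_smul_comm, smul_mul_assoc, mul_assoc]
    _ = (1 / (4 * t)) • (1 : A) := by
        rw [Ring.inverse_mul_cancel _ hunit, Ring.mul_inverse_cancel _ hunit, mul_one]

theorem norm_resolventTrunc_le (ht : 0 < t) (y : A) :
    ‖resolventTrunc t y‖ ≤ 1 / (2 * √t) := by
  have hsq : ‖star (resolventTrunc t y) * resolventTrunc t y‖ ≤ 1 / (4 * t) := by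
    rw [CStarAlgebra.norm_le_iff_le_algebraMap _ (by positivity) (star_mul_self_nonneg _),
      Algebra.algebraMap_eq_smul_one]
    exact star_resolventTrunc_mul_self_le ht y
  rw [CStarRing.norm_star_mul_self, ← sq] at hsq
  refine le_of_sq_le_sq ?_ (by positivity)
  rw [div_pow, mul_pow, Real.sq_sqrt ht.le]
  norm_num at hsq ⊢
  exact hsq

theorem star_sub_resolventTrunc_mul_self_le (ht : 0 < t) (y : A) :
    star (y - resolventTrunc t y) * (y - resolventTrunc t y) ≤
      (t / 4) • (star (star y * y) * (star y * y)) := by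
  have hrem : y - resolventTrunc t y = t • (resolventTrunc t y * (star y * y)) := by
    rw [sub_eq_iff_eq_add', ← mul_smul_comm]
    conv_lhs => rw [← resolventTrunc_mul ht.le y, mul_add, mul_one]
  calc star (y - resolventTrunc t y) * (y - resolventTrunc t y)
      = (t * t) • (star (star y * y) * (star (resolventTrunc t y) * resolventTrunc t y) *
          (star y * y)) := by
        simp only [hrem, star_smul, star_mul, star_trivial, smul_mul_assoc, mul_smul_comm,
          smul_smul, mul_assoc]
    _ ≤ (t * t) • (star (star y * y) * ((1 / (4 * t)) • (1 : A)) * (star y * y)) := by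
        gcongr
        exact star_left_conjugate_le_conjugate (star_resolventTrunc_mul_self_le ht y) _
    _ = (t / 4) • (star (star y * y) * (star y * y)) := by
        simp only [mul_smul_comm, smul_mul_assoc, smul_smul, mul_one]
        congr 1
        field_simp

theorem continuous_resolventTrunc (ht : 0 ≤ t) : Continuous (resolventTrunc t : A → A) := by
  have hinv : Continuous fun y : A => Ring.inverse (1 + t • (star y * y)) :=
    continuous_iff_continuousAt.mpr fun y =>
      ContinuousAt.comp (f := fun y : A => 1 + t • (star y * y))
        (NormedRing.inverse_continuousAt (isUnit_one_add_smul_star_mul_self ht y).unit)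
        (by fun_prop)
  exact continuous_id.mul hinv

variable {X ι : Type*} [MeasurableSpace X] [Fintype ι]

/-- The coefficients along `e` of the remainder `Y - Y (1 + t Y* Y)⁻¹`, where `Y` is the random sum
with coefficients `a`. -/
def truncRemainder {A : Type*} [CStarAlgebra A] (μ : Measure X) (e : ι → X → ℂ) (t : ℝ)
    (a : ι → A) : ι → A :=
  randomCoeff μ e (randomSum e a - resolventTrunc t ∘ randomSum e a)

theorem star_truncRemainder (ht : 0 ≤ t) (μ : Measure X) (e : ι → X → ℂ) (a : ι → A) :
    star (truncRemainder μ e t a) = truncRemainder μ (star e) t (star a) := by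
  rw [truncRemainder, truncRemainder, star_randomCoeff]
  congr 1
  funext x
  simp only [Pi.star_apply, Pi.sub_apply, Function.comp_apply, star_sub, star_resolventTrunc ht,
    star_randomSum]

end Truncation

section Steinhaus

variable {X ι : Type*} [MeasurableSpace X] [DecidableEq ι]

/-- A continuous orthonormal system whose products `star (e i) * e j` have the same inner products
as those of independent uniformly distributed unimodular random variables (Steinhaus variables). -/
structure IsSteinhausSystem [TopologicalSpace X] (μ : Measure X) (e : ι → X → ℂ) : Prop where
  continuous (j : ι) : Continuous (e j)
  integral_star_mul (i j : ι) : ∫ x, star (e i x) * e j x ∂μ = if i = j then 1 else 0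
  integral_star_mul_mul (i j k l : ι) :
    ∫ x, star (star (e i x) * e j x) * (star (e k x) * e l x) ∂μ =
      if (i = j ∧ k = l) ∨ (i = k ∧ j = l) then 1 else 0

protected theorem IsSteinhausSystem.star [TopologicalSpace X] {μ : Measure X} {e : ι → X → ℂ}
    (he : IsSteinhausSystem μ e) : IsSteinhausSystem μ (star e) where
  continuous j := (he.continuous j).star
  integral_star_mul i j := by
    simpa only [Pi.star_apply, star_star, mul_comm, eq_comm] using he.integral_star_mul j i
  integral_star_mul_mul i j k l := by
    have hint := he.integral_star_mul_mul j i l k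
    simp only [Pi.star_apply, star_mul, star_star] at hint ⊢
    convert hint using 1
    · congr 1 with x
      ring
    · grind

theorem sum_ite_pairing {M : Type*} [AddCommGroup M] [Fintype ι] (T : ι → ι → ι → ι → M) :
    (∑ i, ∑ j, ∑ k, ∑ l, if (i = j ∧ k = l) ∨ (i = k ∧ j = l) then T i j k l else 0) =
      ∑ i, ∑ k, T i i k k + ∑ i, ∑ j, T i j i j - ∑ i, T i i i i := by
  have hsplit (i j k l : ι) : (if (i = j ∧ k = l) ∨ (i = k ∧ j = l) then T i j k l else 0) =
      (if i = j then if k = l then T i j k l else 0 else 0) +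
        (if i = k then if j = l then T i j k l else 0 else 0) -
        (if i = j then if i = k then if i = l then T i j k l else 0 else 0 else 0) := by
    split_ifs <;> grind
  simp only [hsplit, Finset.sum_add_distrib, Finset.sum_sub_distrib, Finset.sum_ite_eq,
    Finset.sum_ite_irrel, Finset.sum_const_zero, Finset.mem_univ, if_true]

variable {A : Type*} [CStarAlgebra A] [TopologicalSpace X] [CompactSpace X]
  [OpensMeasurableSpace X] {μ : Measure X} [IsFiniteMeasure μ] [Fintype ι] {e : ι → X → ℂ}

theorem IsSteinhausSystem.integral_sq_star_mul_self (he : IsSteinhausSystem μ e) (a : ι → A) :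
    ∫ x, star (star (randomSum e a x) * randomSum e a x) *
        (star (randomSum e a x) * randomSum e a x) ∂μ =
      columnSq a * columnSq a + ∑ j, star (a j) * columnSq (star a) * a j -
        ∑ j, star (star (a j) * a j) * (star (a j) * a j) := by
  let pairProd (p : ι × ι) (x : X) : ℂ := star (e p.1 x) * e p.2 x
  let pairCoeff (p : ι × ι) : A := star (a p.1) * a p.2
  have hpair (x : X) :
      star (randomSum e a x) * randomSum e a x = randomSum pairProd pairCoeff x := by
    simp only [randomSum, pairProd, pairCoeff, star_sum, star_smul, Finset.sum_mul_sum,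
      smul_mul_smul_comm, Fintype.sum_prod_type]
  have hcont (p : ι × ι) : Continuous (pairProd p) :=
    (he.continuous p.1).star.mul (he.continuous p.2)
  simp only [hpair]
  rw [integral_star_randomSum_mul_randomSum hcont]
  simp only [pairProd, pairCoeff, Fintype.sum_prod_type, he.integral_star_mul_mul, ite_smul,
    one_smul, zero_smul]
  rw [sum_ite_pairing fun i j k l => star (star (a i) * a j) * (star (a k) * a l)]
  congr 2
  · simp only [columnSq, Finset.sum_mul_sum, star_mul, star_star]
  · rw [Finset.sum_comm]
    simp only [columnSq, Pi.star_apply, star_mul, star_star, Finset.mul_sum, Finset.sum_mul,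
      mul_assoc]

variable [PartialOrder A] [StarOrderedRing A]

theorem columnSq_randomCoeff_le (he : ∀ j, Continuous (e j))
    (horth : ∀ i j, ∫ x, star (e i x) * e j x ∂μ = if i = j then 1 else 0) {Z : X → A}
    (hZ : Continuous Z) :
    columnSq (randomCoeff μ e Z) ≤ ∫ x, star (Z x) * Z x ∂μ := by
  set b := randomCoeff μ e Z
  set S := randomSum e b with hS
  have hScont : Continuous S := continuous_randomSum he b
  have hSZ : ∫ x, star (S x) * Z x ∂μ = columnSq b := integral_star_randomSum_mul he b hZ
  have hSS : ∫ x, star (S x) * S x ∂μ = columnSq b := by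
    rw [hS, integral_star_randomSum_mul he b hScont, hS, randomCoeff_randomSum he horth, columnSq]
  have hZS : ∫ x, star (Z x) * S x ∂μ = columnSq b := by
    have hstar := (starL' ℝ (A := A)).integral_comp_comm (μ := μ) fun x => star (S x) * Z x
    simp only [starL'_apply, star_mul, star_star] at hstar
    exact hstar.trans (hSZ ▸ isSelfAdjoint_columnSq b)
  have hnonneg : 0 ≤ ∫ x, star (Z x - S x) * (Z x - S x) ∂μ :=
    integral_nonneg fun x => star_mul_self_nonneg _
  have hexpand : ∫ x, star (Z x - S x) * (Z x - S x) ∂μ =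
      ∫ x, star (Z x) * Z x ∂μ - columnSq b := by
    have hint {f g : X → A} (hf : Continuous f) (hg : Continuous g) :
        Integrable (fun x => star (f x) * g x) μ := integrable_of_continuous (hf.star.mul hg)
    have hdiff {f : X → A} (hf : Continuous f) :
        Integrable (fun x => star (Z x) * f x - star (S x) * f x) μ :=
      (hint hZ hf).sub (hint hScont hf)
    simp only [star_sub, sub_mul, mul_sub]
    rw [integral_sub (hdiff hZ) (hdiff hScont), integral_sub (hint hZ hZ) (hint hScont hZ),
      integral_sub (hint hZ hScont) (hint hScont hScont), hSZ, hSS, hZS, sub_self, sub_zero]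
  exact sub_nonneg.mp (hexpand ▸ hnonneg)

theorem IsSteinhausSystem.integral_sq_star_mul_self_le (he : IsSteinhausSystem μ e) (a : ι → A) :
    ∫ x, star (star (randomSum e a x) * randomSum e a x) *
        (star (randomSum e a x) * randomSum e a x) ∂μ ≤
      (‖columnSq a‖ * rowColumnNorm a ^ 2) • (1 : A) := by
  rw [he.integral_sq_star_mul_self, sq_rowColumnNorm, mul_add, add_smul]
  have hdiag : 0 ≤ ∑ j, star (star (a j) * a j) * (star (a j) * a j) :=
    Finset.sum_nonneg fun j _ => star_mul_self_nonneg _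
  exact (sub_le_self _ hdiag).trans
    (add_le_add (columnSq_mul_columnSq_le a) (sum_conjugate_columnSq_star_le a))

variable {t : ℝ}

theorem IsSteinhausSystem.norm_columnSq_truncRemainder_le (he : IsSteinhausSystem μ e)
    (ht : 0 < t) (a : ι → A) :
    ‖columnSq (truncRemainder μ e t a)‖ ≤ t / 4 * (‖columnSq a‖ * rowColumnNorm a ^ 2) := by
  have hY : Continuous (randomSum e a) := continuous_randomSum he.continuous a
  have hT : Continuous (resolventTrunc t ∘ randomSum e a) :=
    (continuous_resolventTrunc ht.le).comp hY
  rw [CStarAlgebra.norm_le_iff_le_algebraMap _ (by positivity) (columnSq_nonneg _),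
    Algebra.algebraMap_eq_smul_one, mul_smul]
  refine (columnSq_randomCoeff_le he.continuous he.integral_star_mul (hY.sub hT)).trans ?_
  refine (integral_mono (integrable_of_continuous ((hY.sub hT).star.mul (hY.sub hT)))
    (integrable_of_continuous ?_) fun x =>
      star_sub_resolventTrunc_mul_self_le ht (randomSum e a x)).trans ?_
  · fun_prop
  · rw [integral_smul]
    exact smul_le_smul_of_nonneg_left (he.integral_sq_star_mul_self_le a) (by positivity)

theorem IsSteinhausSystem.rowColumnNorm_truncRemainder_le (he : IsSteinhausSystem μ e)
    (ht : 0 < t) (a : ι → A) :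
    rowColumnNorm (truncRemainder μ e t a) ≤ √t / 2 * rowColumnNorm a ^ 2 := by
  have hcol := he.norm_columnSq_truncRemainder_le ht a
  have hrow := he.star.norm_columnSq_truncRemainder_le ht (star a)
  rw [rowColumnNorm_star, ← star_truncRemainder ht.le] at hrow
  refine Real.sqrt_le_iff.mpr ⟨by positivity, (add_le_add hcol hrow).trans_eq ?_⟩
  rw [← mul_add, ← add_mul, ← sq_rowColumnNorm, mul_pow, div_pow, Real.sq_sqrt ht.le]
  ring

variable {F : Type*} [NormedAddCommGroup F] [NormedSpace ℂ F] [CompleteSpace F]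

theorem IsSteinhausSystem.norm_sum_apply_sub_truncRemainder_le (he : IsSteinhausSystem μ e)
    (ht : 0 < t) (ξ : ι → A →L[ℂ] F) (a : ι → A) :
    ‖∑ j, ξ j (a j) - ∑ j, ξ j (truncRemainder μ e t a j)‖ ≤
      1 / (2 * √t) * ∫ x, ‖randomSum (star e) ξ x‖ ∂μ := by
  have hY : Continuous (randomSum e a) := continuous_randomSum he.continuous a
  have hT : Continuous (resolventTrunc t ∘ randomSum e a) :=
    (continuous_resolventTrunc ht.le).comp hY
  have hsub : a - truncRemainder μ e t a = randomCoeff μ e (resolventTrunc t ∘ randomSum e a) := by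
    rw [truncRemainder, randomCoeff_sub he.continuous hY hT,
      randomCoeff_randomSum he.continuous he.integral_star_mul, sub_sub_cancel]
  simp only [← Finset.sum_sub_distrib, ← map_sub, ← Pi.sub_apply, hsub]
  exact norm_sum_apply_randomCoeff_le he.continuous ξ hT fun x => norm_resolventTrunc_le ht _

theorem IsSteinhausSystem.norm_sum_apply_le_half_add (he : IsSteinhausSystem μ e)
    (ξ : ι → A →L[ℂ] F) {C : ℝ} (hC₀ : 0 ≤ C)
    (hC : ∀ b : ι → A, ‖∑ j, ξ j (b j)‖ ≤ C * rowColumnNorm b) (a : ι → A) :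
    ‖∑ j, ξ j (a j)‖ ≤
      ((∫ x, ‖randomSum (star e) ξ x‖ ∂μ) + C) / 2 * rowColumnNorm a := by
  set I := ∫ x, ‖randomSum (star e) ξ x‖ ∂μ with hI
  rcases (show 0 ≤ rowColumnNorm a from Real.sqrt_nonneg _).eq_or_lt with hzero | hpos
  · simpa only [← hzero, mul_zero] using hC a
  -- the level at which both errors are proportional to `rowColumnNorm a`
  set t := (rowColumnNorm a ^ 2)⁻¹ with ht
  have htpos : 0 < t := by positivity
  have hsqrt : √t = (rowColumnNorm a)⁻¹ := by rw [ht, Real.sqrt_inv, Real.sqrt_sq hpos.le]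
  set b := truncRemainder μ e t a
  have hbnorm : rowColumnNorm b ≤ rowColumnNorm a / 2 := by
    refine (he.rowColumnNorm_truncRemainder_le htpos a).trans_eq ?_
    rw [hsqrt]
    field_simp
  have hdiff : ‖∑ j, ξ j (a j) - ∑ j, ξ j (b j)‖ ≤ rowColumnNorm a / 2 * I := by
    refine (he.norm_sum_apply_sub_truncRemainder_le htpos ξ a).trans_eq ?_
    rw [hsqrt, ← hI]
    field_simp
  calc ‖∑ j, ξ j (a j)‖
      ≤ ‖∑ j, ξ j (a j) - ∑ j, ξ j (b j)‖ + ‖∑ j, ξ j (b j)‖ := norm_le_norm_sub_add _ _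
    _ ≤ rowColumnNorm a / 2 * I + C * (rowColumnNorm a / 2) := by
        gcongr
        exact (hC b).trans (by gcongr)
    _ = (I + C) / 2 * rowColumnNorm a := by ring

theorem IsSteinhausSystem.norm_sum_apply_le (he : IsSteinhausSystem μ e) (ξ : ι → A →L[ℂ] F)
    (a : ι → A) :
    ‖∑ j, ξ j (a j)‖ ≤ (∫ x, ‖randomSum (star e) ξ x‖ ∂μ) * rowColumnNorm a := by
  set I := ∫ x, ‖randomSum (star e) ξ x‖ ∂μ
  have hI₀ : 0 ≤ I := integral_nonneg fun x => norm_nonneg _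
  let S : Set ℝ := {C | 0 ≤ C ∧ ∀ b : ι → A, ‖∑ j, ξ j (b j)‖ ≤ C * rowColumnNorm b}
  have hne : S.Nonempty := ⟨∑ j, ‖ξ j‖, Finset.sum_nonneg fun j _ => norm_nonneg _,
    norm_sum_apply_le_sum_norm_mul_rowColumnNorm ξ⟩
  have hbdd : BddBelow S := ⟨0, fun C hC => hC.1⟩
  have hclosed : IsClosed S := by
    have hS : S = Set.Ici 0 ∩ ⋂ b : ι → A, {C | ‖∑ j, ξ j (b j)‖ ≤ C * rowColumnNorm b} := by
      ext C
      simp only [S, Set.mem_ofPred_eq, Set.mem_inter_iff, Set.mem_Ici, Set.mem_iInter]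
    rw [hS]
    exact isClosed_Ici.inter (isClosed_iInter fun b =>
      isClosed_le continuous_const (continuous_id.mul continuous_const))
  obtain ⟨hbest₀, hbest⟩ := hclosed.csInf_mem hne hbdd
  have hhalf : sInf S ≤ (I + sInf S) / 2 :=
    csInf_le hbdd ⟨div_nonneg (add_nonneg hI₀ hbest₀) zero_le_two,
      he.norm_sum_apply_le_half_add ξ hbest₀ hbest⟩
  have hle : sInf S ≤ I := by linarith
  exact (hbest a).trans (mul_le_mul_of_nonneg_right hle (Real.sqrt_nonneg _))

end Steinhaus

section Circle

theorem star_coe_circle (z : Circle) : star (z : ℂ) = (z : ℂ)⁻¹ :=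
  (Circle.coe_inv_eq_conj z).symm.trans (Circle.coe_inv z)

variable {ι : Type*} [Fintype ι]

theorem prod_coe_zpow_single [DecidableEq ι] (z : ι → Circle) (i : ι) :
    ∏ r, (z r : ℂ) ^ (Pi.single i 1 : ι → ℤ) r = z i := by
  simp [Pi.single_apply]

variable [MeasurableSpace Circle] [BorelSpace Circle] (m₀ : Measure Circle) [m₀.IsHaarMeasure]
  [IsProbabilityMeasure m₀]

theorem integral_circle_zpow (n : ℤ) :
    ∫ z : Circle, (z : ℂ) ^ n ∂m₀ = if n = 0 then 1 else 0 := by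
  split_ifs with hn
  · simp only [hn, zpow_zero, integral_const, probReal_univ, one_smul]
  · have hroot : (Circle.exp (Real.pi / n) : ℂ) ^ n = -1 := by
      rw [Circle.coe_exp, ← Complex.exp_int_mul, ← Complex.exp_pi_mul_I]
      congr 1
      push_cast
      field_simp
    refine integral_eq_zero_of_mul_left_eq_neg (g := Circle.exp (Real.pi / n)) fun z => ?_
    rw [Circle.coe_mul, mul_zpow, hroot, neg_one_mul]

theorem integral_circle_monomial (n : ι → ℤ) :
    ∫ z : ι → Circle, ∏ r, (z r : ℂ) ^ n r ∂(Measure.pi fun _ => m₀) = if n = 0 then 1 else 0 := by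
  rw [integral_fintype_prod_eq_prod fun r (w : Circle) => (w : ℂ) ^ n r]
  simp only [integral_circle_zpow, Finset.prod_ite_zero, Finset.mem_univ, true_imp_iff,
    Finset.prod_const_one, funext_iff, Pi.zero_apply]

theorem isSteinhausSystem_circle [DecidableEq ι] :
    IsSteinhausSystem (Measure.pi fun _ => m₀) fun (j : ι) (z : ι → Circle) => (z j : ℂ) where
  continuous j := by fun_prop
  integral_star_mul i j := by
    have hmonomial (z : ι → Circle) : star (z i : ℂ) * z j =
        ∏ r, (z r : ℂ) ^ (Pi.single j 1 - Pi.single i 1 : ι → ℤ) r := by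
      simp only [Pi.sub_apply, zpow_sub₀ (Circle.coe_ne_zero _), Finset.prod_div_distrib,
        prod_coe_zpow_single, star_coe_circle]
      exact inv_mul_eq_div _ _
    have hexponent : (Pi.single j 1 - Pi.single i 1 : ι → ℤ) = 0 ↔ i = j := by
      simp only [funext_iff, Pi.sub_apply, Pi.single_apply, Pi.zero_apply]
      refine ⟨fun h => ?_, by grind⟩
      have hi := h i
      grind
    simp only [hmonomial, integral_circle_monomial, hexponent]
  integral_star_mul_mul i j k l := by
    have hmonomial (z : ι → Circle) :
        star (star (z i : ℂ) * z j) * (star (z k : ℂ) * z l) = ∏ r, (z r : ℂ) ^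
          (Pi.single i 1 + Pi.single l 1 - (Pi.single j 1 + Pi.single k 1) : ι → ℤ) r := by
      simp only [Pi.sub_apply, Pi.add_apply, zpow_sub₀ (Circle.coe_ne_zero _),
        zpow_add₀ (Circle.coe_ne_zero _), Finset.prod_div_distrib, Finset.prod_mul_distrib,
        prod_coe_zpow_single, star_mul, star_coe_circle, star_inv₀, inv_inv]
      field_simp [Circle.coe_ne_zero]
    have hexponent : (Pi.single i 1 + Pi.single l 1 - (Pi.single j 1 + Pi.single k 1) : ι → ℤ) = 0
        ↔ (i = j ∧ k = l) ∨ (i = k ∧ j = l) := by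
      simp only [funext_iff, Pi.sub_apply, Pi.add_apply, Pi.single_apply, Pi.zero_apply]
      refine ⟨fun h => ?_, by grind⟩
      have hi := h i
      have hl := h l
      have hj := h j
      have hk := h k
      grind
    simp only [hmonomial, integral_circle_monomial, hexponent]

end Circle

theorem sqrt_add_le_sqrt_add_sqrt {p q : ℝ} (hp : 0 ≤ p) (hq : 0 ≤ q) : √(p + q) ≤ √p + √q := by
  refine Real.sqrt_le_iff.mpr ⟨by positivity, ?_⟩
  nlinarith [Real.sq_sqrt hp, Real.sq_sqrt hq, Real.sqrt_nonneg p, Real.sqrt_nonneg q]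

theorem stmt_13_general [MeasurableSpace Circle] [BorelSpace Circle] (m₀ : Measure Circle)
    [m₀.IsHaarMeasure] [IsProbabilityMeasure m₀] {ι : Type*} [Fintype ι] {A : Type*}
    [CStarAlgebra A] {F : Type*} [NormedAddCommGroup F] [NormedSpace ℂ F] [CompleteSpace F]
    (a : ι → A) (ξ : ι → A →L[ℂ] F) :
    ‖∑ j, ξ j (a j)‖ ≤
      (∫ z : ι → Circle, ‖∑ j, (z j : ℂ) • ξ j‖ ∂(Measure.pi fun _ => m₀)) *
        √(‖∑ j, star (a j) * a j‖ + ‖∑ j, a j * star (a j)‖) := by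
  classical
  let := CStarAlgebra.spectralOrder A
  have := CStarAlgebra.spectralOrderedRing A
  have hbound := (isSteinhausSystem_circle (ι := ι) m₀).star.norm_sum_apply_le ξ a
  simpa only [randomSum, rowColumnNorm, columnSq, Pi.star_apply, star_star] using hbound

/-- non-commutative Khintchine/Paley inequality of Lust-Piquard–Pisier, matrix
case: with `M = M_N(ℂ) = B(ℂ^N)` with operator norm, `a_j ∈ M`, `ξ_j ∈ M*`, and `μ` the
Haar probability on `𝕋^m`,
`|Σ ξ_j(a_j)| ≤ (∫ ‖Σ z_j ξ_j‖_{M*} dμ) · (‖Σ a_j*a_j‖^{1/2} + ‖Σ a_j a_j*‖^{1/2})`. -/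
theorem stmt_13 [MeasurableSpace Circle] [BorelSpace Circle]
    (m₀ : Measure Circle) [m₀.IsHaarMeasure] [IsProbabilityMeasure m₀]
    (N m : ℕ) (hN : 1 ≤ N) (hm : 1 ≤ m)
    (a : Fin m → EuclideanSpace ℂ (Fin N) →L[ℂ] EuclideanSpace ℂ (Fin N))
    (ξ : Fin m → (EuclideanSpace ℂ (Fin N) →L[ℂ] EuclideanSpace ℂ (Fin N)) →L[ℂ] ℂ) :
    ‖∑ j, ξ j (a j)‖ ≤
      (∫ z : Fin m → Circle, ‖∑ j, (z j : ℂ) • ξ j‖ ∂(Measure.pi fun _ : Fin m => m₀)) *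
      (Real.sqrt ‖∑ j, (ContinuousLinearMap.adjoint (a j)).comp (a j)‖ +
       Real.sqrt ‖∑ j, (a j).comp (ContinuousLinearMap.adjoint (a j))‖) := by
  refine (stmt_13_general m₀ a ξ).trans (mul_le_mul_of_nonneg_left ?_ ?_)
  · exact sqrt_add_le_sqrt_add_sqrt (norm_nonneg _) (norm_nonneg _)
  · exact integral_nonneg fun z => norm_nonneg _
end
end

section
/- Let G be a group, φ : G → ℂ, and C ≥ 0. Suppose that for every function ε : G → ℂ with |ε(x)| ≤ 1 for all x ∈ G, the kernel (s,t) ↦ ε(st)·φ(st) on G × G is a Schur multiplier of norm at most C. Then for every function ξ : G × G → ℂ with |ξ(s,t)| ≤ 1 for all (s,t), the kernel (s,t) ↦ ξ(s,t)·φ(st) is a Schur multiplier of norm at most 8C. -/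
open scoped ENNReal NNReal
open MeasureTheory ContinuousLinearMap

noncomputable section

/-!
On finite blocks, let `K` be the best constant such that multiplication by `ψ` sends every kernel
with contractive rows and columns to a matrix of norm at most `K`; multiplying a contraction by a
bounded `ξ` gives such a kernel. Twist a kernel `k` by random cube roots of unity `u = ω(p(s, t))`
and let `Y` be the operator with entries `u k`. Then `‖Y‖` may be large, but the moments
`𝔼 ‖Y* Y e_s‖²` are at most `2`. Truncating the singular values of `Y` smoothly at level `1/√2`
writes `Y = V + ½ V Y* Y` with `‖V‖ ≤ 1/√2`. Untwisting and averaging, the hypothesis controls the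
contribution of `V`, and the averaged remainder is half of a kernel with contractive rows and
columns. Hence `K ≤ C/√2 + K/2`, and `K` is finite on a finite block, so `K ≤ √2 C`. Operator norms
are suprema over finite blocks, which gives the general case.
-/

section RandomSigns

open Finset
open scoped ComplexConjugate BigOperators

variable {Ω S T X ι : Type*} [Fintype Ω]

lemma norm_sq_expect_le (f : Ω → ℂ) : ‖𝔼 ω, f ω‖ ^ 2 ≤ 𝔼 ω, ‖f ω‖ ^ 2 := by
  cases isEmpty_or_nonempty Ω
  · simp
  calc ‖𝔼 ω, f ω‖ ^ 2 ≤ (𝔼 ω, ‖f ω‖) ^ 2 := by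
        gcongr
        exact RCLike.norm_expect_le (K := ℝ)
    _ ≤ 𝔼 ω, ‖f ω‖ ^ 2 := by
        simpa using expect_mul_sq_le_sq_mul_sq univ (fun ω => ‖f ω‖) 1

lemma sum_norm_sq_expect_le (I : Finset ι) (f : Ω → ι → ℂ) :
    ∑ i ∈ I, ‖𝔼 ω, f ω i‖ ^ 2 ≤ 𝔼 ω, ∑ i ∈ I, ‖f ω i‖ ^ 2 :=
  calc ∑ i ∈ I, ‖𝔼 ω, f ω i‖ ^ 2 ≤ ∑ i ∈ I, 𝔼 ω, ‖f ω i‖ ^ 2 :=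
        sum_le_sum fun i _ => norm_sq_expect_le fun ω => f ω i
    _ = 𝔼 ω, ∑ i ∈ I, ‖f ω i‖ ^ 2 := (expect_sum_comm _ _ _).symm

lemma expect_norm_sq_sum_mul_of_orthogonal [Nonempty Ω] (I : Finset ι) {u : Ω → ι → ℂ}
    (a : ι → ℂ) (norm_u : ∀ ω i, ‖u ω i‖ = 1)
    (orthogonal : ∀ i ∈ I, ∀ j ∈ I, i ≠ j → 𝔼 ω, u ω i * conj (u ω j) = 0) :
    𝔼 ω, ‖∑ i ∈ I, u ω i * a i‖ ^ 2 = ∑ i ∈ I, ‖a i‖ ^ 2 := by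
  classical
  have inner_eq : ∀ i ∈ I, ∀ j ∈ I,
      𝔼 ω, u ω i * conj (u ω j) * (a i * conj (a j)) = if i = j then (‖a i‖ : ℂ) ^ 2 else 0 := by
    intro i hi j hj
    rw [← expect_mul]
    split_ifs with hij
    · subst hij
      simp [Complex.mul_conj', norm_u]
    · rw [orthogonal i hi j hj hij, zero_mul]
  have expand : ∀ ω, (‖∑ i ∈ I, u ω i * a i‖ : ℂ) ^ 2 =
      ∑ i ∈ I, ∑ j ∈ I, u ω i * conj (u ω j) * (a i * conj (a j)) := by
    intro ω
    rw [← Complex.mul_conj', map_sum, sum_mul_sum]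
    refine sum_congr rfl fun i _ => sum_congr rfl fun j _ => ?_
    rw [map_mul]
    ring
  have complex_eq : 𝔼 ω, (‖∑ i ∈ I, u ω i * a i‖ : ℂ) ^ 2 = ∑ i ∈ I, (‖a i‖ : ℂ) ^ 2 := by
    simp_rw [expand, expect_sum_comm]
    refine sum_congr rfl fun i hi => ?_
    rw [sum_congr rfl (inner_eq i hi), sum_ite_eq, if_pos hi]
  apply Complex.ofReal_injective
  simpa [Complex.ofReal_expect] using complex_eq

/-- A random unimodular matrix whose four corners on every nondegenerate rectangle have a mixed
moment equal to zero. This is all the independence the averaging argument uses. -/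
structure IsRectangleOrthogonal (u : Ω → S → T → ℂ) : Prop where
  norm_eq_one : ∀ ω s t, ‖u ω s t‖ = 1
  expect_eq_zero : ∀ s s' t t', s ≠ s' → t ≠ t' →
    𝔼 ω, u ω s t * conj (u ω s' t) * conj (u ω s t') * u ω s' t' = 0

namespace IsRectangleOrthogonal

variable {u : Ω → S → T → ℂ}

lemma conj_mul_self (hu : IsRectangleOrthogonal u) (ω : Ω) (s : S) (t : T) :
    conj (u ω s t) * u ω s t = 1 := by
  rw [Complex.conj_mul', hu.norm_eq_one]
  simp

lemma conj_swap (hu : IsRectangleOrthogonal u) :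
    IsRectangleOrthogonal fun ω t s => conj (u ω s t) where
  norm_eq_one ω t s := by rw [RCLike.norm_conj, hu.norm_eq_one]
  expect_eq_zero t t' s s' ht hs := by
    rw [← hu.expect_eq_zero s' s t t' hs.symm ht]
    refine expect_congr rfl fun ω _ => ?_
    simp only [Complex.conj_conj]
    ring

end IsRectangleOrthogonal

-- Square roots of unity would not do: on a rectangle with equal opposite corners the four signs
-- multiply to `1`, whereas a cube root of unity still occurs squared.
lemma isRectangleOrthogonal_stdAddChar [Fintype X] [DecidableEq X] {p : S → T → X}
    (inj_right : ∀ s, Function.Injective (p s))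
    (inj_left : ∀ t, Function.Injective fun s => p s t) :
    IsRectangleOrthogonal fun (ω : X → ZMod 3) s t => (ZMod.stdAddChar (ω (p s t)) : ℂ) := by
  refine ⟨fun ω s t => AddChar.norm_apply _ _, fun s s' t t' hs ht => ?_⟩
  let coord (x : X) : (X → ZMod 3) →+ ZMod 3 := Pi.evalAddMonoidHom _ x
  let f : (X → ZMod 3) →+ ZMod 3 :=
    coord (p s t) - coord (p s' t) - coord (p s t') + coord (p s' t')
  let χ : AddChar (X → ZMod 3) ℂ := (ZMod.stdAddChar (N := 3)).compAddMonoidHom f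
  have summand_eq : ∀ ω : X → ZMod 3,
      ZMod.stdAddChar (ω (p s t)) * conj (ZMod.stdAddChar (ω (p s' t)) : ℂ) *
        conj (ZMod.stdAddChar (ω (p s t'))) * ZMod.stdAddChar (ω (p s' t')) = χ ω := by
    intro ω
    simp only [← AddChar.map_neg_eq_conj, ← AddChar.map_add_eq_mul, ← sub_eq_add_neg]
    rfl
  simp_rw [summand_eq]
  refine AddChar.expect_eq_zero_iff_ne_zero.2 fun χ_eq_zero => ?_
  have f_single : f (Pi.single (p s t) 1) = 1 + if p s' t' = p s t then 1 else 0 := by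
    simp [f, coord, Pi.single_apply, (inj_left t).ne hs.symm, (inj_right s).ne ht.symm]
  have f_single_eq_zero : f (Pi.single (p s t) 1) = 0 := by
    apply ZMod.injective_stdAddChar
    rw [AddChar.map_zero_eq_one]
    exact DFunLike.congr_fun χ_eq_zero _
  rw [f_single] at f_single_eq_zero
  split_ifs at f_single_eq_zero <;> exact absurd f_single_eq_zero (by decide)

end RandomSigns

section Truncation

open scoped InnerProductSpace

variable {H K : Type*} [NormedAddCommGroup H] [InnerProductSpace ℂ H]
  [NormedAddCommGroup K] [InnerProductSpace ℂ K]

lemma four_mul_re_inner_le_norm_add_sq (x y : H) : 4 * (⟪x, y⟫_ℂ).re ≤ ‖x + y‖ ^ 2 := by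
  have polarization := re_inner_eq_norm_add_mul_self_sub_norm_sub_mul_self_div_four (𝕜 := ℂ) x y
  rw [RCLike.re_eq_complex_re] at polarization
  nlinarith [sq_nonneg ‖x - y‖]

variable [CompleteSpace H] [CompleteSpace K]

lemma isUnit_one_add_smul_adjoint_comp_self (T : H →L[ℂ] K) {r : ℝ} (hr : 0 ≤ r) :
    IsUnit (1 + r • (adjoint T ∘L T)) := by
  have nonneg : 0 ≤ r • (adjoint T ∘L T) := smul_nonneg hr <|
    ContinuousLinearMap.nonneg_iff_isPositive _ |>.2 T.isPositive_adjoint_comp_self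
  exact (IsStrictlyPositive.add_nonneg isStrictlyPositive_one nonneg).isUnit

-- The smooth truncation is `T₁ = T (1 + T* T / (4c²))⁻¹`; on singular values it is
-- `σ ↦ σ / (1 + σ² / (4c²))`, which is at most `c` by AM-GM.
theorem exists_smooth_truncation (T : H →L[ℂ] K) {c : ℝ} (hc : 0 < c) :
    ∃ T₁ : H →L[ℂ] K, ‖T₁‖ ≤ c ∧
      T₁ + (4 * (c : ℂ) ^ 2)⁻¹ • (T₁ ∘L (adjoint T ∘L T)) = T ∧
      T₁ + (4 * (c : ℂ) ^ 2)⁻¹ • ((T ∘L adjoint T) ∘L T₁) = T := by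
  set D : H →L[ℂ] H := (4 * c ^ 2)⁻¹ • (adjoint T ∘L T) with hD
  have D_apply (v : H) : D v = (4 * (c : ℂ) ^ 2)⁻¹ • adjoint T (T v) := by
    simp [hD, RCLike.real_smul_eq_coe_smul (K := ℂ)]
  obtain ⟨R, one_add_mul_R, R_mul_one_add⟩ : ∃ R, (1 + D) * R = 1 ∧ R * (1 + D) = 1 :=
    (isUnit_iff_exists).1 (isUnit_one_add_smul_adjoint_comp_self T (by positivity))
  refine ⟨T ∘L R, ContinuousLinearMap.opNorm_le_bound _ hc.le fun v => ?_, ?_, ?_⟩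
  · have R_add : R v + D (R v) = v := DFunLike.congr_fun one_add_mul_R v
    have inner_D : ⟪R v, D (R v)⟫_ℂ = (((4 * c ^ 2)⁻¹ * ‖T (R v)‖ ^ 2 : ℝ) : ℂ) := by
      simp [D_apply, adjoint_inner_right, inner_self_eq_norm_sq_to_K]
    have amgm := four_mul_re_inner_le_norm_add_sq (R v) (D (R v))
    rw [R_add, inner_D, Complex.ofReal_re] at amgm
    refine le_of_sq_le_sq ?_ (by positivity)
    calc ‖T (R v)‖ ^ 2 = c ^ 2 * (4 * ((4 * c ^ 2)⁻¹ * ‖T (R v)‖ ^ 2)) := by field_simp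
      _ ≤ (c * ‖v‖) ^ 2 := by rw [mul_pow]; gcongr
  · calc T ∘L R + (4 * (c : ℂ) ^ 2)⁻¹ • ((T ∘L R) ∘L (adjoint T ∘L T)) = T ∘L (R * (1 + D)) := by
          ext v; simp [D_apply]
      _ = T := by rw [R_mul_one_add]; rfl
  · calc T ∘L R + (4 * (c : ℂ) ^ 2)⁻¹ • ((T ∘L adjoint T) ∘L (T ∘L R)) = T ∘L ((1 + D) * R) := by
          ext v; simp [D_apply]
      _ = T := by rw [one_add_mul_R]; rfl

end Truncation

section Kernels

open Finset InnerProductSpace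
open scoped ComplexConjugate BigOperators lp

variable {S T : Type*}

/-- The canonical orthonormal basis of `ℓ²(S)`. -/
def stdBasis (S : Type*) : HilbertBasis S ℂ ℓ²(S, ℂ) := default

/-- The matrix entries of an operator `ℓ²(S) → ℓ²(T)`, with the column index `s` first as in
`IsSchurMultiplier`. -/
def entry (A : ℓ²(S, ℂ) →L[ℂ] ℓ²(T, ℂ)) (s : S) (t : T) : ℂ :=
  ⟪stdBasis T t, A (stdBasis S s)⟫_ℂ

lemma isSchurMultiplier_iff_entry {ψ : S × T → ℂ} {C : ℝ} :
    IsSchurMultiplier ψ C ↔ ∀ A : ℓ²(S, ℂ) →L[ℂ] ℓ²(T, ℂ), ∃ B : ℓ²(S, ℂ) →L[ℂ] ℓ²(T, ℂ),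
      (∀ s t, entry B s t = ψ (s, t) * entry A s t) ∧ ‖B‖ ≤ C * ‖A‖ :=
  Iff.rfl

lemma norm_stdBasis (s : S) : ‖stdBasis S s‖ = 1 :=
  (stdBasis S).orthonormal.norm_eq_one s

lemma inner_stdBasis_left (t : T) (x : ℓ²(T, ℂ)) : ⟪stdBasis T t, x⟫_ℂ = x t :=
  ((stdBasis T).repr_apply_apply x t).symm

lemma entry_add (A B : ℓ²(S, ℂ) →L[ℂ] ℓ²(T, ℂ)) (s : S) (t : T) :
    entry (A + B) s t = entry A s t + entry B s t :=
  inner_add_right _ _ _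

lemma entry_smul (c : ℂ) (A : ℓ²(S, ℂ) →L[ℂ] ℓ²(T, ℂ)) (s : S) (t : T) :
    entry (c • A) s t = c * entry A s t :=
  inner_smul_right _ _ _

lemma entry_adjoint (A : ℓ²(S, ℂ) →L[ℂ] ℓ²(T, ℂ)) (t : T) (s : S) :
    entry (adjoint A) t s = conj (entry A s t) := by
  rw [entry, entry, adjoint_inner_right, inner_conj_symm]

lemma entry_injective :
    Function.Injective (entry : (ℓ²(S, ℂ) →L[ℂ] ℓ²(T, ℂ)) → S → T → ℂ) := by
  intro A B h
  refine ContinuousLinearMap.ext_on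
    (Submodule.dense_iff_topologicalClosure_eq_top.2 (stdBasis S).dense_span) ?_
  rintro _ ⟨s, rfl⟩
  ext t
  rw [← inner_stdBasis_left, ← inner_stdBasis_left]
  exact congrFun₂ h s t

lemma sum_norm_sq_apply [Fintype T] (x : ℓ²(T, ℂ)) : ∑ t, ‖x t‖ ^ 2 = ‖x‖ ^ 2 := by
  simpa [inner_stdBasis_left] using (stdBasis T).toOrthonormalBasis.sum_sq_norm_inner_right x

lemma sum_norm_sq_entry [Fintype T] (A : ℓ²(S, ℂ) →L[ℂ] ℓ²(T, ℂ)) (s : S) :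
    ∑ t, ‖entry A s t‖ ^ 2 = ‖A (stdBasis S s)‖ ^ 2 := by
  simp only [entry, inner_stdBasis_left, sum_norm_sq_apply]

lemma entry_adjoint_comp_self [Fintype T] (A : ℓ²(S, ℂ) →L[ℂ] ℓ²(T, ℂ)) (s s' : S) :
    entry (adjoint A ∘L A) s s' = ∑ t, conj (entry A s' t) * entry A s t := by
  have parseval := (stdBasis T).toOrthonormalBasis.sum_inner_mul_inner
    (A (stdBasis S s')) (A (stdBasis S s))
  simpa [entry, adjoint_inner_right] using parseval.symm

lemma isSchurMultiplier_of_forall_norm_le_one {ψ : S × T → ℂ} {K : ℝ}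
    (h : ∀ A : ℓ²(S, ℂ) →L[ℂ] ℓ²(T, ℂ), ‖A‖ ≤ 1 → ∃ B : ℓ²(S, ℂ) →L[ℂ] ℓ²(T, ℂ),
      (∀ s t, entry B s t = ψ (s, t) * entry A s t) ∧ ‖B‖ ≤ K) :
    IsSchurMultiplier ψ K := by
  refine isSchurMultiplier_iff_entry.2 fun A => ?_
  obtain rfl | A_ne_zero := eq_or_ne A 0
  · exact ⟨0, fun s t => by simp [entry], by simp⟩
  have norm_ne_zero : (‖A‖ : ℂ) ≠ 0 := by simpa using A_ne_zero
  have norm_unit : ‖(‖A‖ : ℂ)⁻¹ • A‖ ≤ 1 := by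
    rw [norm_smul, norm_inv, Complex.norm_real, norm_norm]
    exact inv_mul_le_one
  obtain ⟨B, entry_B, norm_B⟩ := h _ norm_unit
  refine ⟨(‖A‖ : ℂ) • B, fun s t => ?_, ?_⟩
  · rw [entry_smul, entry_B, entry_smul]
    field_simp
  · rw [norm_smul, Complex.norm_real, norm_norm, mul_comm]
    gcongr

/-- The operator with prescribed matrix entries, for finite index types. -/
def kernelOp [Fintype S] [Fintype T] : (S → T → ℂ) →ₗ[ℂ] ℓ²(S, ℂ) →L[ℂ] ℓ²(T, ℂ) where
  toFun k := ∑ s, ∑ t, k s t • rankOne ℂ (stdBasis T t) (stdBasis S s)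
  map_add' k l := by simp only [Pi.add_apply, add_smul, sum_add_distrib]
  map_smul' c k := by simp only [Pi.smul_apply, smul_eq_mul, mul_smul, smul_sum, RingHom.id_apply]

variable [Fintype S] [Fintype T]

lemma entry_kernelOp (k : S → T → ℂ) (s : S) (t : T) : entry (kernelOp k) s t = k s t := by
  classical
  simp [entry, kernelOp, orthonormal_iff_ite.1 (stdBasis S).orthonormal,
    orthonormal_iff_ite.1 (stdBasis T).orthonormal]

lemma kernelOp_apply (k : S → T → ℂ) (x : ℓ²(S, ℂ)) (t : T) :
    kernelOp k x t = ∑ s, k s t * x s := by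
  classical
  rw [← inner_stdBasis_left, kernelOp]
  simp [inner_stdBasis_left, orthonormal_iff_ite.1 (stdBasis T).orthonormal]

lemma kernelOp_eq_iff {k : S → T → ℂ} {A : ℓ²(S, ℂ) →L[ℂ] ℓ²(T, ℂ)} :
    kernelOp k = A ↔ ∀ s t, entry A s t = k s t := by
  refine ⟨fun h s t => h ▸ entry_kernelOp k s t, fun h => entry_injective ?_⟩
  ext s t
  rw [entry_kernelOp, h]

lemma norm_kernelOp_le_sum (k : S → T → ℂ) : ‖kernelOp k‖ ≤ ∑ s, ∑ t, ‖k s t‖ := by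
  refine norm_sum_le_of_le _ fun s _ => norm_sum_le_of_le _ fun t _ => ?_
  rw [norm_smul, norm_rankOne, norm_stdBasis, norm_stdBasis, mul_one, mul_one]

lemma norm_kernelOp_expect_le {Ω : Type*} [Fintype Ω] [Nonempty Ω] {k : Ω → S → T → ℂ} {M : ℝ}
    (h : ∀ ω, ‖kernelOp (k ω)‖ ≤ M) : ‖kernelOp fun s t => 𝔼 ω, k ω s t‖ ≤ M := by
  have kernel_eq : (fun s t => 𝔼 ω, k ω s t) = (Fintype.card Ω : ℂ)⁻¹ • ∑ ω, k ω := by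
    ext s t
    simp [Fintype.expect_eq_sum_div_card, div_eq_inv_mul]
  calc ‖kernelOp fun s t => 𝔼 ω, k ω s t‖
      = (Fintype.card Ω : ℝ)⁻¹ * ‖∑ ω, kernelOp (k ω)‖ := by
        rw [kernel_eq, map_smul, map_sum, norm_smul, norm_inv, Complex.norm_natCast]
    _ ≤ (Fintype.card Ω : ℝ)⁻¹ * (Fintype.card Ω * M) := by
        gcongr
        simpa using norm_sum_le_of_le univ fun ω _ => h ω
    _ = M := inv_mul_cancel_left₀ (Nat.cast_ne_zero.2 Fintype.card_ne_zero) M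

lemma IsSchurMultiplier.norm_kernelOp_le {ψ : S × T → ℂ} {C : ℝ} (hψ : IsSchurMultiplier ψ C)
    (A : ℓ²(S, ℂ) →L[ℂ] ℓ²(T, ℂ)) : ‖kernelOp fun s t => ψ (s, t) * entry A s t‖ ≤ C * ‖A‖ := by
  obtain ⟨B, entry_B, norm_B⟩ := isSchurMultiplier_iff_entry.1 hψ A
  rwa [kernelOp_eq_iff.2 entry_B]

end Kernels

section Decomposition

open Finset
open scoped ComplexConjugate BigOperators lp

variable {Ω S T : Type*}

/-- Every row `(k(s,t))_t` has `ℓ²`-norm at most one. For columns, apply this to the transpose. -/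
def HasContractiveRows [Fintype T] (k : S → T → ℂ) : Prop :=
  ∀ s, ∑ t, ‖k s t‖ ^ 2 ≤ 1

lemma HasContractiveRows.norm_le_one [Fintype T] {k : S → T → ℂ} (hk : HasContractiveRows k)
    (s : S) (t : T) : ‖k s t‖ ≤ 1 := by
  rw [← sq_le_one_iff₀ (norm_nonneg _)]
  exact (single_le_sum (fun t _ => sq_nonneg ‖k s t‖) (mem_univ t)).trans (hk s)

lemma hasContractiveRows_mul_entry [Fintype T] {ξ : S → T → ℂ} (hξ : ∀ s t, ‖ξ s t‖ ≤ 1)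
    {A : ℓ²(S, ℂ) →L[ℂ] ℓ²(T, ℂ)} (hA : ‖A‖ ≤ 1) :
    HasContractiveRows fun s t => ξ s t * entry A s t := by
  intro s
  calc ∑ t, ‖ξ s t * entry A s t‖ ^ 2 ≤ ∑ t, ‖entry A s t‖ ^ 2 := by
        gcongr with t _
        rw [norm_mul]
        exact mul_le_of_le_one_left (norm_nonneg _) (hξ s t)
    _ = ‖A (stdBasis S s)‖ ^ 2 := sum_norm_sq_entry A s
    _ ≤ 1 := pow_le_one₀ (norm_nonneg _) <|
        (A.unit_le_opNorm _ (norm_stdBasis s).le).trans hA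

variable [Fintype Ω] [Nonempty Ω] [Fintype T] {u : Ω → S → T → ℂ}

lemma IsRectangleOrthogonal.expect_norm_sq_gram_of_ne (hu : IsRectangleOrthogonal u)
    (k : S → T → ℂ) {s s' : S} (hs : s ≠ s') :
    𝔼 ω, ‖∑ t, conj (u ω s' t * k s' t) * (u ω s t * k s t)‖ ^ 2 =
      ∑ t, ‖k s' t‖ ^ 2 * ‖k s t‖ ^ 2 := by
  have second_moment := expect_norm_sq_sum_mul_of_orthogonal univ
    (u := fun ω t => u ω s t * conj (u ω s' t)) (fun t => conj (k s' t) * k s t)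
    (fun ω t => by simp [hu.norm_eq_one])
    (fun t _ t' _ ht => by
      rw [← hu.expect_eq_zero s s' t t' hs ht]
      refine expect_congr rfl fun ω _ => ?_
      rw [map_mul, Complex.conj_conj]
      ring)
  simp only [norm_mul, RCLike.norm_conj, mul_pow] at second_moment
  rw [← second_moment]
  refine expect_congr rfl fun ω _ => ?_
  congr 2
  refine sum_congr rfl fun t _ => ?_
  rw [map_mul]
  ring

variable [Fintype S] {k : S → T → ℂ}

lemma IsRectangleOrthogonal.sum_expect_norm_sq_gram_le_two (hu : IsRectangleOrthogonal u)
    (rows : HasContractiveRows k) (cols : HasContractiveRows fun t s => k s t) (s : S) :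
    ∑ s', 𝔼 ω, ‖∑ t, conj (u ω s' t * k s' t) * (u ω s t * k s t)‖ ^ 2 ≤ 2 := by
  classical
  have diagonal : 𝔼 ω, ‖∑ t, conj (u ω s t * k s t) * (u ω s t * k s t)‖ ^ 2 ≤ 1 := by
    refine expect_le univ_nonempty fun ω _ => pow_le_one₀ (norm_nonneg _) ?_
    refine (norm_sum_le _ _).trans (le_of_eq_of_le (sum_congr rfl fun t _ => ?_) (rows s))
    rw [norm_mul, RCLike.norm_conj, norm_mul, hu.norm_eq_one, one_mul, sq]
  have off_diagonal :
      ∑ s' ∈ univ.erase s, 𝔼 ω, ‖∑ t, conj (u ω s' t * k s' t) * (u ω s t * k s t)‖ ^ 2 ≤ 1 :=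
    calc ∑ s' ∈ univ.erase s, 𝔼 ω, ‖∑ t, conj (u ω s' t * k s' t) * (u ω s t * k s t)‖ ^ 2
        = ∑ s' ∈ univ.erase s, ∑ t, ‖k s' t‖ ^ 2 * ‖k s t‖ ^ 2 :=
          sum_congr rfl fun s' hs' => hu.expect_norm_sq_gram_of_ne k (ne_of_mem_erase hs').symm
      _ ≤ ∑ s', ∑ t, ‖k s' t‖ ^ 2 * ‖k s t‖ ^ 2 :=
          sum_le_sum_of_subset_of_nonneg (erase_subset _ _) fun _ _ _ => by positivity
      _ = ∑ t, (∑ s', ‖k s' t‖ ^ 2) * ‖k s t‖ ^ 2 := by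
          rw [sum_comm]
          simp_rw [sum_mul]
      _ ≤ ∑ t, ‖k s t‖ ^ 2 :=
          sum_le_sum fun t _ => mul_le_of_le_one_left (sq_nonneg _) (cols t)
      _ ≤ 1 := rows s
  rw [← add_sum_erase _ _ (mem_univ s)]
  linarith

lemma IsRectangleOrthogonal.hasContractiveRows_expect (hu : IsRectangleOrthogonal u)
    (rows : HasContractiveRows k) (cols : HasContractiveRows fun t s => k s t)
    {Y V : Ω → ℓ²(S, ℂ) →L[ℂ] ℓ²(T, ℂ)} (entry_Y : ∀ ω s t, entry (Y ω) s t = u ω s t * k s t)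
    (norm_V : ∀ ω, ‖V ω‖ ^ 2 ≤ 2⁻¹) :
    HasContractiveRows fun s t =>
      𝔼 ω, conj (u ω s t) * entry (V ω ∘L (adjoint (Y ω) ∘L Y ω)) s t := by
  intro s
  have pointwise (ω : Ω) :
      ∑ t, ‖conj (u ω s t) * entry (V ω ∘L (adjoint (Y ω) ∘L Y ω)) s t‖ ^ 2 ≤
        2⁻¹ * ∑ s', ‖∑ t, conj (u ω s' t * k s' t) * (u ω s t * k s t)‖ ^ 2 := by
    calc ∑ t, ‖conj (u ω s t) * entry (V ω ∘L (adjoint (Y ω) ∘L Y ω)) s t‖ ^ 2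
        = ‖V ω ((adjoint (Y ω) ∘L Y ω) (stdBasis S s))‖ ^ 2 := by
          simp only [norm_mul, RCLike.norm_conj, hu.norm_eq_one, one_mul, sum_norm_sq_entry]
          rfl
      _ ≤ (‖V ω‖ * ‖(adjoint (Y ω) ∘L Y ω) (stdBasis S s)‖) ^ 2 := by
          gcongr
          exact (V ω).le_opNorm _
      _ ≤ 2⁻¹ * ‖(adjoint (Y ω) ∘L Y ω) (stdBasis S s)‖ ^ 2 := by
          rw [mul_pow]
          gcongr
          exact norm_V ω
      _ = 2⁻¹ * ∑ s', ‖∑ t, conj (u ω s' t * k s' t) * (u ω s t * k s t)‖ ^ 2 := by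
          rw [← sum_norm_sq_entry]
          simp only [entry_adjoint_comp_self, entry_Y]
  calc ∑ t, ‖𝔼 ω, conj (u ω s t) * entry (V ω ∘L (adjoint (Y ω) ∘L Y ω)) s t‖ ^ 2
      ≤ 𝔼 ω, ∑ t, ‖conj (u ω s t) * entry (V ω ∘L (adjoint (Y ω) ∘L Y ω)) s t‖ ^ 2 :=
        sum_norm_sq_expect_le _ _
    _ ≤ 𝔼 ω, 2⁻¹ * ∑ s', ‖∑ t, conj (u ω s' t * k s' t) * (u ω s t * k s t)‖ ^ 2 :=
        expect_le_expect fun ω _ => pointwise ω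
    _ = 2⁻¹ * ∑ s', 𝔼 ω, ‖∑ t, conj (u ω s' t * k s' t) * (u ω s t * k s t)‖ ^ 2 := by
        rw [← mul_expect, expect_sum_comm]
    _ ≤ 1 := by linarith [hu.sum_expect_norm_sq_gram_le_two rows cols s]

lemma IsRectangleOrthogonal.hasContractiveColumns_expect (hu : IsRectangleOrthogonal u)
    (rows : HasContractiveRows k) (cols : HasContractiveRows fun t s => k s t)
    {Y V : Ω → ℓ²(S, ℂ) →L[ℂ] ℓ²(T, ℂ)} (entry_Y : ∀ ω s t, entry (Y ω) s t = u ω s t * k s t)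
    (norm_V : ∀ ω, ‖V ω‖ ^ 2 ≤ 2⁻¹) :
    HasContractiveRows fun t s =>
      𝔼 ω, conj (u ω s t) * entry ((Y ω ∘L adjoint (Y ω)) ∘L V ω) s t := by
  have adjoint_rows := hu.conj_swap.hasContractiveRows_expect (k := fun t s => conj (k s t))
    (Y := fun ω => adjoint (Y ω)) (V := fun ω => adjoint (V ω))
    (fun t => by simpa only [RCLike.norm_conj] using cols t)
    (fun s => by simpa only [RCLike.norm_conj] using rows s)
    (fun ω t s => by rw [entry_adjoint, entry_Y, map_mul])
    (fun ω => by rw [LinearIsometryEquiv.norm_map]; exact norm_V ω)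
  have entry_eq (ω s t) : entry (adjoint (V ω) ∘L (adjoint (adjoint (Y ω)) ∘L adjoint (Y ω))) t s =
      conj (entry ((Y ω ∘L adjoint (Y ω)) ∘L V ω) s t) := by
    rw [← entry_adjoint, adjoint_comp, adjoint_comp]
  intro t
  refine le_of_eq_of_le (sum_congr rfl fun s _ => ?_) (adjoint_rows t)
  simp only [entry_eq]
  rw [← RCLike.norm_conj, map_expect]
  simp only [map_mul]

-- The truncation level `√2 / 2` is chosen to make the remainder kernel `r` contractive again.
theorem IsRectangleOrthogonal.exists_decomposition (hu : IsRectangleOrthogonal u)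
    (rows : HasContractiveRows k) (cols : HasContractiveRows fun t s => k s t) :
    ∃ (V : Ω → ℓ²(S, ℂ) →L[ℂ] ℓ²(T, ℂ)) (r : S → T → ℂ), (∀ ω, ‖V ω‖ ≤ √2 / 2) ∧
      HasContractiveRows r ∧ (HasContractiveRows fun t s => r s t) ∧
      ∀ s t, k s t = 𝔼 ω, conj (u ω s t) * entry (V ω) s t + 2⁻¹ * r s t := by
  let Y (ω : Ω) : ℓ²(S, ℂ) →L[ℂ] ℓ²(T, ℂ) := kernelOp fun s t => u ω s t * k s t
  have entry_Y (ω s t) : entry (Y ω) s t = u ω s t * k s t := entry_kernelOp _ s t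
  have level_sq : (√2 / 2) ^ 2 = (2 : ℝ)⁻¹ := by rw [div_pow, Real.sq_sqrt] <;> norm_num
  have coeff_eq : (4 * ((√2 / 2 : ℝ) : ℂ) ^ 2)⁻¹ = 2⁻¹ := by
    rw [← Complex.ofReal_pow, level_sq]
    norm_num
  choose V norm_V truncation truncation' using fun ω =>
    exists_smooth_truncation (Y ω) (c := √2 / 2) (by positivity)
  rw [coeff_eq] at truncation truncation'
  have norm_V_sq (ω) : ‖V ω‖ ^ 2 ≤ 2⁻¹ := level_sq ▸ pow_le_pow_left₀ (norm_nonneg _) (norm_V ω) 2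
  have remainder_comm (ω) : V ω ∘L (adjoint (Y ω) ∘L Y ω) = (Y ω ∘L adjoint (Y ω)) ∘L V ω :=
    smul_right_injective _ (by norm_num : (2 : ℂ)⁻¹ ≠ 0) <|
      add_left_cancel ((truncation ω).trans (truncation' ω).symm)
  refine ⟨V, _, norm_V, hu.hasContractiveRows_expect rows cols entry_Y norm_V_sq, ?_, fun s t => ?_⟩
  · simp only [remainder_comm]
    exact hu.hasContractiveColumns_expect rows cols entry_Y norm_V_sq
  · have pointwise (ω) : k s t = conj (u ω s t) * entry (V ω) s t +
        2⁻¹ * (conj (u ω s t) * entry (V ω ∘L (adjoint (Y ω) ∘L Y ω)) s t) := by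
      have entry_eq := congrArg (entry · s t) (truncation ω)
      simp only [entry_add, entry_smul, entry_Y] at entry_eq
      calc k s t = conj (u ω s t) * (u ω s t * k s t) := by
            rw [← mul_assoc, hu.conj_mul_self, one_mul]
        _ = _ := by
            rw [← entry_eq]
            ring
    rw [mul_expect, ← expect_add_distrib, ← expect_congr rfl fun ω _ => pointwise ω]
    simp

end Decomposition

section RowColumnMultipliers

open Finset Filter Topology
open scoped ComplexConjugate BigOperators lp

variable {Ω S T : Type*} [Fintype S] [Fintype T] {ψ : S × T → ℂ} {C K : ℝ}

/-- Multiplication by `ψ` turns every kernel whose rows and columns are contractive into the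
matrix of an operator of norm at most `K`. -/
def IsRowColumnMultiplier (ψ : S × T → ℂ) (K : ℝ) : Prop :=
  ∀ k : S → T → ℂ, HasContractiveRows k → (HasContractiveRows fun t s => k s t) →
    ‖kernelOp fun s t => ψ (s, t) * k s t‖ ≤ K

namespace IsRowColumnMultiplier

lemma sum_norm (ψ : S × T → ℂ) : IsRowColumnMultiplier ψ (∑ s, ∑ t, ‖ψ (s, t)‖) := by
  intro k rows _
  refine (norm_kernelOp_le_sum _).trans ?_
  gcongr with s _ t _
  rw [norm_mul]
  exact mul_le_of_le_one_right (norm_nonneg _) (rows.norm_le_one s t)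

lemma improve [Fintype Ω] [Nonempty Ω] {u : Ω → S → T → ℂ} (hu : IsRectangleOrthogonal u)
    (hC : 0 ≤ C) (hψ : ∀ ω, IsSchurMultiplier (fun q => conj (u ω q.1 q.2) * ψ q) C)
    (hK : IsRowColumnMultiplier ψ K) : IsRowColumnMultiplier ψ (√2 / 2 * C + K / 2) := by
  intro k rows cols
  obtain ⟨V, r, norm_V, r_rows, r_cols, k_eq⟩ := hu.exists_decomposition rows cols
  let main (ω : Ω) (s : S) (t : T) : ℂ := conj (u ω s t) * ψ (s, t) * entry (V ω) s t
  have norm_main (ω) : ‖kernelOp (main ω)‖ ≤ √2 / 2 * C :=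
    calc ‖kernelOp (main ω)‖ ≤ C * ‖V ω‖ := (hψ ω).norm_kernelOp_le (V ω)
      _ ≤ √2 / 2 * C := by
        rw [mul_comm]
        gcongr
        exact norm_V ω
  have kernel_eq : (fun s t => ψ (s, t) * k s t) =
      (fun s t => 𝔼 ω, main ω s t) + (2⁻¹ : ℂ) • fun s t => ψ (s, t) * r s t := by
    ext s t
    simp only [k_eq s t, mul_add, mul_expect, Pi.add_apply, Pi.smul_apply, smul_eq_mul, main]
    congr 1
    · exact expect_congr rfl fun ω _ => by ring
    · ring
  calc ‖kernelOp fun s t => ψ (s, t) * k s t‖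
      ≤ ‖kernelOp fun s t => 𝔼 ω, main ω s t‖ +
          ‖(2⁻¹ : ℂ)‖ * ‖kernelOp fun s t => ψ (s, t) * r s t‖ := by
        rw [kernel_eq, map_add, map_smul, ← norm_smul]
        exact norm_add_le _ _
    _ ≤ √2 / 2 * C + ‖(2⁻¹ : ℂ)‖ * K := by
        gcongr
        · exact norm_kernelOp_expect_le norm_main
        · exact hK r r_rows r_cols
    _ = √2 / 2 * C + K / 2 := by
        rw [norm_inv, Complex.norm_ofNat]
        ring

theorem of_isRectangleOrthogonal [Fintype Ω] [Nonempty Ω] {u : Ω → S → T → ℂ}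
    (hu : IsRectangleOrthogonal u) (hC : 0 ≤ C)
    (hψ : ∀ ω, IsSchurMultiplier (fun q => conj (u ω q.1 q.2) * ψ q) C) :
    IsRowColumnMultiplier ψ (√2 * C) := by
  set K₀ : ℝ := ∑ s, ∑ t, ‖ψ (s, t)‖
  have iterate (n : ℕ) : IsRowColumnMultiplier ψ (√2 * C + K₀ * 2⁻¹ ^ n) := by
    induction n with
    | zero =>
      intro k rows cols
      have nonneg : 0 ≤ √2 * C := by positivity
      linarith [sum_norm ψ k rows cols]
    | succ n ih =>
      convert improve hu hC hψ ih using 1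
      ring
  intro k rows cols
  have tendsto : Tendsto (fun n : ℕ => √2 * C + K₀ * 2⁻¹ ^ n) atTop (𝓝 (√2 * C)) := by
    simpa using ((tendsto_pow_atTop_nhds_zero_of_lt_one (by norm_num)
      (by norm_num : (2⁻¹ : ℝ) < 1)).const_mul K₀).const_add (√2 * C)
  exact ge_of_tendsto' tendsto fun n => iterate n k rows cols

end IsRowColumnMultiplier

theorem IsRowColumnMultiplier.isSchurMultiplier_mul (hψ : IsRowColumnMultiplier ψ K)
    {ξ : S × T → ℂ} (hξ : ∀ q, ‖ξ q‖ ≤ 1) : IsSchurMultiplier (fun q => ξ q * ψ q) K := by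
  refine isSchurMultiplier_of_forall_norm_le_one fun A hA => ⟨_, fun s t => ?_, hψ
    (fun s t => ξ (s, t) * entry A s t) (hasContractiveRows_mul_entry (fun s t => hξ _) hA) ?_⟩
  · rw [entry_kernelOp]
    ring
  · have adjoint_rows := hasContractiveRows_mul_entry (ξ := fun t s => ξ (s, t))
      (fun t s => hξ _) (A := adjoint A) (by rwa [LinearIsometryEquiv.norm_map])
    simpa only [HasContractiveRows, entry_adjoint, norm_mul, RCLike.norm_conj] using adjoint_rows

end RowColumnMultipliers

section Restriction

open scoped InnerProductSpace lp

lemma norm_comp_comp_le {𝕜 E F G H : Type*} [NontriviallyNormedField 𝕜]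
    [SeminormedAddCommGroup E] [NormedSpace 𝕜 E] [SeminormedAddCommGroup F] [NormedSpace 𝕜 F]
    [SeminormedAddCommGroup G] [NormedSpace 𝕜 G] [SeminormedAddCommGroup H] [NormedSpace 𝕜 H]
    {P : G →L[𝕜] H} {Q : E →L[𝕜] F} (A : F →L[𝕜] G) (hP : ‖P‖ ≤ 1) (hQ : ‖Q‖ ≤ 1) :
    ‖P ∘L A ∘L Q‖ ≤ ‖A‖ :=
  calc ‖P ∘L A ∘L Q‖ ≤ ‖P‖ * (‖A‖ * ‖Q‖) :=
        (opNorm_comp_le _ _).trans (by gcongr; exact opNorm_comp_le _ _)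
    _ ≤ ‖A‖ * ‖Q‖ := mul_le_of_le_one_left (by positivity) hP
    _ ≤ ‖A‖ := mul_le_of_le_one_right (norm_nonneg _) hQ

variable {S T S' T' : Type*} {i : S' → S} {j : T' → T}

lemma exists_linearIsometry_map_stdBasis (hi : Function.Injective i) :
    ∃ V : ℓ²(S', ℂ) →ₗᵢ[ℂ] ℓ²(S, ℂ), ∀ s, V (stdBasis S' s) = stdBasis S (i s) := by
  classical
  have orthonormal : Orthonormal ℂ (stdBasis S ∘ i) := (stdBasis S).orthonormal.comp i hi
  exact ⟨orthonormal.orthogonalFamily.linearIsometry, fun s =>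
    (orthonormal.orthogonalFamily.linearIsometry_apply_single 1).trans (one_smul ℂ _)⟩

lemma exists_restriction_operator (hi : Function.Injective i) :
    ∃ P : ℓ²(S, ℂ) →L[ℂ] ℓ²(S', ℂ), ‖P‖ ≤ 1 ∧
      (∀ s, P (stdBasis S (i s)) = stdBasis S' s) ∧
      ∀ s, adjoint P (stdBasis S' s) = stdBasis S (i s) := by
  obtain ⟨V, V_stdBasis⟩ := exists_linearIsometry_map_stdBasis hi
  refine ⟨adjoint V.toContinuousLinearMap, ?_, fun s => ?_, fun s => ?_⟩
  · rw [LinearIsometryEquiv.norm_map]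
    exact V.norm_toContinuousLinearMap_le
  · rw [← V_stdBasis]
    exact DFunLike.congr_fun V.adjoint_comp_self _
  · rw [adjoint_adjoint]
    exact V_stdBasis s

lemma exists_compression (hi : Function.Injective i) (hj : Function.Injective j)
    (A : ℓ²(S, ℂ) →L[ℂ] ℓ²(T, ℂ)) :
    ∃ A' : ℓ²(S', ℂ) →L[ℂ] ℓ²(T', ℂ), ‖A'‖ ≤ ‖A‖ ∧
      ∀ s t, entry A' s t = entry A (i s) (j t) := by
  obtain ⟨P, norm_P, -, adjoint_P⟩ := exists_restriction_operator hi
  obtain ⟨Q, norm_Q, -, adjoint_Q⟩ := exists_restriction_operator hj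
  refine ⟨Q ∘L A ∘L adjoint P,
    norm_comp_comp_le A norm_Q ((adjoint.norm_map P).trans_le norm_P), fun s t => ?_⟩
  rw [entry, comp_apply, comp_apply, adjoint_P, ← adjoint_inner_left, adjoint_Q, entry]

lemma exists_extension (hi : Function.Injective i) (hj : Function.Injective j)
    (A' : ℓ²(S', ℂ) →L[ℂ] ℓ²(T', ℂ)) :
    ∃ A : ℓ²(S, ℂ) →L[ℂ] ℓ²(T, ℂ), ‖A‖ ≤ ‖A'‖ ∧
      ∀ s t, entry A (i s) (j t) = entry A' s t := by
  obtain ⟨P, norm_P, P_stdBasis, -⟩ := exists_restriction_operator hi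
  obtain ⟨Q, norm_Q, Q_stdBasis, -⟩ := exists_restriction_operator hj
  refine ⟨adjoint Q ∘L A' ∘L P,
    norm_comp_comp_le A' ((adjoint.norm_map Q).trans_le norm_Q) norm_P, fun s t => ?_⟩
  rw [entry, comp_apply, comp_apply, P_stdBasis, adjoint_inner_right, Q_stdBasis, entry]

lemma IsSchurMultiplier.comp_injective {ψ : S × T → ℂ} {C : ℝ} (hψ : IsSchurMultiplier ψ C)
    (hC : 0 ≤ C) (hi : Function.Injective i) (hj : Function.Injective j) :
    IsSchurMultiplier (fun q : S' × T' => ψ (i q.1, j q.2)) C := by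
  refine isSchurMultiplier_iff_entry.2 fun A' => ?_
  obtain ⟨A, norm_A, entry_A⟩ := exists_extension hi hj A'
  obtain ⟨B, entry_B, norm_B⟩ := isSchurMultiplier_iff_entry.1 hψ A
  obtain ⟨B', norm_B', entry_B'⟩ := exists_compression hi hj B
  refine ⟨B', fun s t => by rw [entry_B', entry_B, entry_A], ?_⟩
  calc ‖B'‖ ≤ C * ‖A‖ := norm_B'.trans norm_B
    _ ≤ C * ‖A'‖ := by gcongr

end Restriction

section Locality

open Finset
open scoped ComplexConjugate InnerProductSpace lp

variable {S T : Type*} {M : ℝ}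

lemma exists_clm_apply_eq_inner {H : Type*} [NormedAddCommGroup H] [InnerProductSpace ℂ H]
    {R : T → H} (hM : 0 ≤ M)
    (bessel : ∀ v (F : Finset T), ∑ t ∈ F, ‖⟪R t, v⟫_ℂ‖ ^ 2 ≤ (M * ‖v‖) ^ 2) :
    ∃ B : H →L[ℂ] ℓ²(T, ℂ), (∀ v t, B v t = ⟪R t, v⟫_ℂ) ∧ ‖B‖ ≤ M := by
  have memℓp (v : H) : Memℓp (fun t => ⟪R t, v⟫_ℂ) 2 :=
    memℓp_gen' (C := (M * ‖v‖) ^ 2) fun F => by simpa using bessel v F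
  let L : H →ₗ[ℂ] ℓ²(T, ℂ) :=
    { toFun v := ⟨fun t => ⟪R t, v⟫_ℂ, memℓp v⟩
      map_add' v w := by
        ext t
        exact inner_add_right _ _ _
      map_smul' c v := by
        ext t
        exact inner_smul_right _ _ _ }
  have norm_L (v : H) : ‖L v‖ ≤ M * ‖v‖ :=
    lp.norm_le_of_forall_sum_le (p := 2) (by norm_num) (by positivity) fun F => by
      simp only [ENNReal.toReal_ofNat, Real.rpow_ofNat]
      exact bessel v F
  exact ⟨L.mkContinuous M norm_L, fun _ _ => rfl, L.mkContinuous_norm_le hM norm_L⟩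

lemma sum_norm_sq_le_of_norm_kernelOp_le {k : S → T → ℂ} {E : Finset S} {t : T}
    (h : ‖kernelOp fun (s : E) (t' : ({t} : Finset T)) => k s t'‖ ≤ M) :
    ∑ s ∈ E, ‖k s t‖ ^ 2 ≤ M ^ 2 := by
  set A := kernelOp fun (s : E) (t' : ({t} : Finset T)) => k s t'
  let t₀ : ({t} : Finset T) := ⟨t, mem_singleton_self t⟩
  calc ∑ s ∈ E, ‖k s t‖ ^ 2 = ∑ s : E, ‖entry (adjoint A) t₀ s‖ ^ 2 := by
        rw [← sum_coe_sort]
        simp only [entry_adjoint, RCLike.norm_conj, A, entry_kernelOp, t₀]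
    _ = ‖adjoint A (stdBasis _ t₀)‖ ^ 2 := sum_norm_sq_entry _ _
    _ ≤ M ^ 2 := by
        gcongr
        refine ((adjoint A).unit_le_opNorm _ (norm_stdBasis t₀).le).trans ?_
        rwa [LinearIsometryEquiv.norm_map]

lemma sum_norm_sq_sum_mul_le_of_norm_kernelOp_le {k : S → T → ℂ} {E : Finset S} {F : Finset T}
    (h : ‖kernelOp fun (s : E) (t : F) => k s t‖ ≤ M) (v : ℓ²(S, ℂ)) :
    ∑ t ∈ F, ‖∑ s ∈ E, k s t * v s‖ ^ 2 ≤ (M * ‖v‖) ^ 2 := by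
  obtain ⟨P, norm_P, -, adjoint_P⟩ :=
    exists_restriction_operator (i := ((↑) : E → S)) Subtype.val_injective
  have P_apply (s : E) : P v s = v s := by
    rw [← inner_stdBasis_left, ← adjoint_inner_left, adjoint_P, inner_stdBasis_left]
  set A := kernelOp fun (s : E) (t : F) => k s t
  have norm_P_v : ‖P v‖ ≤ ‖v‖ := by simpa using P.le_of_opNorm_le norm_P v
  calc ∑ t ∈ F, ‖∑ s ∈ E, k s t * v s‖ ^ 2 = ∑ t : F, ‖A (P v) t‖ ^ 2 := by
        simp only [A, kernelOp_apply, P_apply]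
        rw [← sum_coe_sort F]
        exact sum_congr rfl fun t _ => by rw [← sum_coe_sort E]
    _ = ‖A (P v)‖ ^ 2 := sum_norm_sq_apply _
    _ ≤ (M * ‖v‖) ^ 2 := by
        gcongr
        exact A.le_of_opNorm_le_of_le h norm_P_v

theorem exists_entry_eq_of_forall_norm_kernelOp_le {k : S → T → ℂ}
    (h : ∀ (E : Finset S) (F : Finset T), ‖kernelOp fun (s : E) (t : F) => k s t‖ ≤ M) :
    ∃ B : ℓ²(S, ℂ) →L[ℂ] ℓ²(T, ℂ), (∀ s t, entry B s t = k s t) ∧ ‖B‖ ≤ M := by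
  have hM : 0 ≤ M := (norm_nonneg _).trans (h ∅ ∅)
  have memℓp_row (t : T) : Memℓp (fun s => conj (k s t)) 2 :=
    memℓp_gen' (C := M ^ 2) fun E => by
      simpa using sum_norm_sq_le_of_norm_kernelOp_le (h E {t})
  let row (t : T) : ℓ²(S, ℂ) := ⟨fun s => conj (k s t), memℓp_row t⟩
  have hasSum_row (v : ℓ²(S, ℂ)) (t : T) : HasSum (fun s => k s t * v s) ⟪row t, v⟫_ℂ := by
    simpa [row, mul_comm] using lp.hasSum_inner (𝕜 := ℂ) (row t) v
  obtain ⟨B, B_apply, norm_B⟩ := exists_clm_apply_eq_inner hM fun v F =>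
    le_of_tendsto' (tendsto_finsetSum F fun t _ => ((hasSum_row v t).norm.pow 2))
      fun E => sum_norm_sq_sum_mul_le_of_norm_kernelOp_le (h E F) v
  refine ⟨B, fun s t => ?_, norm_B⟩
  rw [entry, inner_stdBasis_left, B_apply, ← inner_conj_symm, inner_stdBasis_left]
  exact Complex.conj_conj _

theorem isSchurMultiplier_of_finset {ψ : S × T → ℂ} {C : ℝ} (hC : 0 ≤ C)
    (h : ∀ (E : Finset S) (F : Finset T),
      IsSchurMultiplier (fun q : E × F => ψ (q.1, q.2)) C) :
    IsSchurMultiplier ψ C := by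
  refine isSchurMultiplier_iff_entry.2 fun A =>
    exists_entry_eq_of_forall_norm_kernelOp_le fun E F => ?_
  obtain ⟨A', norm_A', entry_A'⟩ := exists_compression (i := ((↑) : E → S))
    (j := ((↑) : F → T)) Subtype.val_injective Subtype.val_injective A
  calc ‖kernelOp fun (s : E) (t : F) => ψ (s, t) * entry A s t‖ ≤ C * ‖A'‖ := by
        simpa only [entry_A'] using (h E F).norm_kernelOp_le A'
    _ ≤ C * ‖A‖ := by gcongr

end Locality

lemma IsSchurMultiplier.mono {S T : Type*} {ψ : S × T → ℂ} {C C' : ℝ}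
    (hψ : IsSchurMultiplier ψ C) (hCC' : C ≤ C') : IsSchurMultiplier ψ C' := fun A => by
  obtain ⟨B, entry_B, norm_B⟩ := hψ A
  exact ⟨B, entry_B, norm_B.trans (by gcongr)⟩

theorem IsSchurMultiplier.mul_of_injective_of_finite {S T X : Type*} [Finite S] [Finite T]
    [Finite X] {p : S → T → X} (inj_right : ∀ s, Function.Injective (p s))
    (inj_left : ∀ t, Function.Injective fun s => p s t) {ψ : S × T → ℂ} {C : ℝ} (hC : 0 ≤ C)
    (h : ∀ ε : X → ℂ, (∀ x, ‖ε x‖ ≤ 1) →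
      IsSchurMultiplier (fun q : S × T => ε (p q.1 q.2) * ψ q) C)
    {ξ : S × T → ℂ} (hξ : ∀ q, ‖ξ q‖ ≤ 1) :
    IsSchurMultiplier (fun q => ξ q * ψ q) (√2 * C) := by
  classical
  have := Fintype.ofFinite S
  have := Fintype.ofFinite T
  have := Fintype.ofFinite X
  refine (IsRowColumnMultiplier.of_isRectangleOrthogonal
    (isRectangleOrthogonal_stdAddChar inj_right inj_left) hC fun ω => ?_).isSchurMultiplier_mul hξ
  refine h (fun x => starRingEnd ℂ (ZMod.stdAddChar (ω x))) fun x => ?_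
  rw [RCLike.norm_conj, AddChar.norm_apply]

lemma norm_extend_zero_le_one {α β E : Type*} [SeminormedAddCommGroup E] {f : α → β}
    (hf : Function.Injective f) {g : α → E} (hg : ∀ a, ‖g a‖ ≤ 1) (b : β) :
    ‖Function.extend f g 0 b‖ ≤ 1 := by
  by_cases hb : ∃ a, f a = b
  · obtain ⟨a, rfl⟩ := hb
    exact (congrArg norm (hf.extend_apply g 0 a)).trans_le (hg a)
  · simp [Function.extend_apply' _ _ _ hb]

theorem stmt_14_general {S T X : Type*} (p : S → T → X)
    (inj_right : ∀ s, Function.Injective (p s))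
    (inj_left : ∀ t, Function.Injective fun s => p s t) (ψ : S × T → ℂ) (C : ℝ) (hC : 0 ≤ C)
    (h : ∀ ε : X → ℂ, (∀ x, ‖ε x‖ ≤ 1) →
      IsSchurMultiplier (fun q : S × T => ε (p q.1 q.2) * ψ q) C) :
    ∀ ξ : S × T → ℂ, (∀ q, ‖ξ q‖ ≤ 1) →
      IsSchurMultiplier (fun q => ξ q * ψ q) (√2 * C) := by
  intro ξ hξ
  refine isSchurMultiplier_of_finset (by positivity) fun E F => ?_
  let X' : Set X := Set.range fun q : E × F => p q.1 q.2
  let p' (s : E) (t : F) : X' := ⟨p s t, (s, t), rfl⟩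
  have p'_inj_right (s : E) : Function.Injective (p' s) := fun t t' eq =>
    Subtype.ext (inj_right s (congrArg Subtype.val eq))
  have p'_inj_left (t : F) : Function.Injective fun s => p' s t := fun s s' eq =>
    Subtype.ext (inj_left t (congrArg Subtype.val eq))
  refine .mul_of_injective_of_finite p'_inj_right p'_inj_left hC (fun ε hε => ?_)
    fun q => hξ (q.1, q.2)
  have restricted := (h _ (norm_extend_zero_le_one Subtype.val_injective hε)).comp_injective hC
    (i := ((↑) : E → S)) (j := ((↑) : F → T)) Subtype.val_injective Subtype.val_injective
  convert restricted using 3 with q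
  exact (Subtype.val_injective.extend_apply ε 0 (p' q.1 q.2)).symm

/-- Corollary 0.3: if for every `ε : G → ℂ` with `|ε| ≤ 1` the kernel
`(s,t) ↦ ε(st)·φ(st)` is a Schur multiplier of norm at most `C`, then for every
`ξ : G × G → ℂ` with `|ξ| ≤ 1` the kernel `(s,t) ↦ ξ(s,t)·φ(st)` is a Schur multiplier of
norm at most `8C`. -/
theorem stmt_14 {G : Type*} [Group G] (φ : G → ℂ) (C : ℝ) (hC : 0 ≤ C)
    (h : ∀ ε : G → ℂ, (∀ x, ‖ε x‖ ≤ 1) →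
      IsSchurMultiplier (fun p : G × G => ε (p.1 * p.2) * φ (p.1 * p.2)) C) :
    ∀ ξ : G × G → ℂ, (∀ p, ‖ξ p‖ ≤ 1) →
      IsSchurMultiplier (fun p : G × G => ξ p * φ (p.1 * p.2)) (8 * C) := by
  intro ξ hξ
  have sqrt_two_le : √2 ≤ 8 := Real.sqrt_le_iff.2 ⟨by norm_num, by norm_num⟩
  exact (stmt_14_general (· * ·) mul_right_injective mul_left_injective _ C hC h ξ hξ).mono
    (by gcongr)
end
end
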